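/- arXiv:1307.1415 — 16 statements merged into one kernel-verified Lean document; each statement's English description precedes it below -/
import Mathlib

section
/- Let X and Y be nonzero pre-ordered Banach spaces with closed cones. Then the cone B(X,Y)₊ is proper if and only if X equals the norm closure of X₊ − X₊ and Y₊ is proper. -/
open scoped Pointwise

/-!
If `T` and `-T` are both positive, then `T` maps `Cx` into `Cy ∩ -Cy`; when `Cy` is proper, `T`
vanishes on `Cx - Cx`, hence on its closure. Conversely, rank-one operators `x ↦ f x • y` violate
properness of the operator cone: if `y ≠ 0` lies in `Cy ∩ -Cy`, any functional `f ≠ 0` will do, and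
if `Cx - Cx` is not dense, Hahn-Banach gives `f ≠ 0` vanishing on `Cx`, with any `y ≠ 0`.
-/

/-- Hahn-Banach for the span of a cone: a functional bounded above on `C - C` vanishes on `C`,
since `C - C` contains every real multiple of each point of `C`. -/
theorem exists_functional_vanishing_on_cone {X : Type*} [NormedAddCommGroup X] [NormedSpace ℝ X]
    (C : Set X) (h0 : (0 : X) ∈ C)
    (hadd : ∀ a ∈ C, ∀ b ∈ C, a + b ∈ C)
    (hsmul : ∀ r : ℝ, 0 ≤ r → ∀ a ∈ C, r • a ∈ C)
    (hne : closure {z : X | ∃ a ∈ C, ∃ b ∈ C, z = a - b} ≠ Set.univ) :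
    ∃ f : X →L[ℝ] ℝ, f ≠ 0 ∧ ∀ a ∈ C, f a = 0 := by
  obtain ⟨x, hx⟩ := (Set.ne_univ_iff_exists_notMem _).1 hne
  have hconv : Convex ℝ {z : X | ∃ a ∈ C, ∃ b ∈ C, z = a - b} := by
    rintro _ ⟨a, ha, b, hb, rfl⟩ _ ⟨c, hc, d, hd, rfl⟩ s t hs ht -
    refine ⟨s • a + t • c, hadd _ (hsmul s hs a ha) _ (hsmul t ht c hc),
      s • b + t • d, hadd _ (hsmul s hs b hb) _ (hsmul t ht d hd), ?_⟩
    module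
  obtain ⟨f, u, hu, hux⟩ := geometric_hahn_banach_closed_point hconv.closure isClosed_closure hx
  have hlt : ∀ a ∈ C, ∀ r : ℝ, r * f a < u := by
    intro a ha r
    have hmem : r • a ∈ {z : X | ∃ a ∈ C, ∃ b ∈ C, z = a - b} := by
      rcases le_total 0 r with hr | hr
      · exact ⟨r • a, hsmul r hr a ha, 0, h0, by simp⟩
      · exact ⟨0, h0, (-r) • a, hsmul (-r) (by linarith) a ha, by simp⟩
    simpa using hu _ (subset_closure hmem)
  refine ⟨f, ?_, fun a ha => ?_⟩
  · rintro rfl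
    have h := hlt 0 h0 0
    simp at h hux
    linarith
  · by_contra hfa
    have h := hlt a ha (u / f a)
    rw [div_mul_cancel₀ _ hfa] at h
    exact lt_irrefl _ h

/-- For nonzero pre-ordered Banach spaces `X`, `Y` with closed cones,
the cone `B(X,Y)₊ = {T | T Cx ⊆ Cy}` is proper if and only if
`X` is the norm closure of `Cx - Cx` and `Cy` is proper. -/
theorem stmt_1
    {X : Type*} [NormedAddCommGroup X] [NormedSpace ℝ X] [CompleteSpace X] [Nontrivial X]
    {Y : Type*} [NormedAddCommGroup Y] [NormedSpace ℝ Y] [CompleteSpace Y] [Nontrivial Y]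
    (Cx : Set X) (hCx_closed : IsClosed Cx)
    (hCx_add : ∀ a ∈ Cx, ∀ b ∈ Cx, a + b ∈ Cx)
    (hCx_smul : ∀ r : ℝ, 0 ≤ r → ∀ a ∈ Cx, r • a ∈ Cx)
    (Cy : Set Y) (hCy_closed : IsClosed Cy)
    (hCy_add : ∀ a ∈ Cy, ∀ b ∈ Cy, a + b ∈ Cy)
    (hCy_smul : ∀ r : ℝ, 0 ≤ r → ∀ a ∈ Cy, r • a ∈ Cy) :
    ({T : X →L[ℝ] Y | ∀ x ∈ Cx, T x ∈ Cy} ∩ (-{T : X →L[ℝ] Y | ∀ x ∈ Cx, T x ∈ Cy}) = {0})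
      ↔ (closure {z : X | ∃ a ∈ Cx, ∃ b ∈ Cx, z = a - b} = Set.univ
          ∧ Cy ∩ (-Cy) = {0}) := by
  constructor
  · intro h
    have hzero : ∀ T : X →L[ℝ] Y, (∀ x ∈ Cx, T x ∈ Cy) → (∀ x ∈ Cx, -(T x) ∈ Cy) → T = 0 := by
      intro T h1 h2
      have hT : T ∈ ({0} : Set (X →L[ℝ] Y)) := by
        rw [← h]
        exact ⟨h1, h2⟩
      exact hT
    have hrank : ∀ (f : X →L[ℝ] ℝ) (y : Y), f ≠ 0 → y ≠ 0 →
        (∀ x ∈ Cx, f x • y ∈ Cy) → (∀ x ∈ Cx, -(f x • y) ∈ Cy) → False := by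
      intro f y hf hy h1 h2
      have hT := hzero (f.smulRight y) (by simpa using h1) (by simpa using h2)
      apply hf
      ext x
      have hx := DFunLike.congr_fun hT x
      simpa [hy] using hx
    obtain ⟨x₀, hx₀⟩ := exists_ne (0 : X)
    obtain ⟨y₀, hy₀⟩ := exists_ne (0 : Y)
    obtain ⟨g, -, hg⟩ := exists_dual_vector ℝ x₀ (norm_ne_zero_iff.2 hx₀)
    have hg0 : g ≠ 0 := by
      rintro rfl
      simp [eq_comm, hx₀] at hg
    -- An empty `Cx` would make every operator positive.
    obtain ⟨c, hc⟩ : Cx.Nonempty := by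
      by_contra hem
      rw [Set.not_nonempty_iff_eq_empty] at hem
      exact hrank g y₀ hg0 hy₀ (by simp [hem]) (by simp [hem])
    have h0x : (0 : X) ∈ Cx := by simpa using hCx_smul 0 le_rfl c hc
    have h0y : (0 : Y) ∈ Cy := by
      have hT : (0 : X →L[ℝ] Y) ∈ ({0} : Set (X →L[ℝ] Y)) := rfl
      rw [← h] at hT
      simpa using hT.1 c hc
    constructor
    · by_contra hne
      obtain ⟨f, hf, hfC⟩ :=
        exists_functional_vanishing_on_cone Cx h0x hCx_add hCx_smul hne
      exact hrank f y₀ hf hy₀ (fun x hx => by simpa [hfC x hx] using h0y)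
        (fun x hx => by simpa [hfC x hx] using h0y)
    · refine Set.Subset.antisymm ?_ (by simpa using h0y)
      rintro y ⟨hy1, hy2⟩
      by_contra hy
      have hmul : ∀ r : ℝ, r • y ∈ Cy := by
        intro r
        rcases le_total 0 r with hr | hr
        · exact hCy_smul r hr y hy1
        · simpa using hCy_smul (-r) (by linarith) (-y) hy2
      exact hrank g y hg0 hy (fun x _ => hmul _) (fun x _ => by simpa using hmul (-(g x)))
  · rintro ⟨hd, hp⟩
    have h0y : (0 : Y) ∈ Cy := by
      have h : (0 : Y) ∈ ({0} : Set Y) := rfl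
      rw [← hp] at h
      exact h.1
    refine Set.Subset.antisymm ?_ ?_
    · rintro T ⟨h1, h2⟩
      have hT : ∀ x ∈ Cx, T x = 0 := by
        intro x hx
        have h : T x ∈ ({0} : Set Y) := by
          rw [← hp]
          exact ⟨h1 x hx, h2 x hx⟩
        exact h
      have hdense : Dense {z : X | ∃ a ∈ Cx, ∃ b ∈ Cx, z = a - b} := dense_iff_closure_eq.2 hd
      have hext : (T : X → Y) = (0 : X →L[ℝ] Y) := by
        refine Continuous.ext_on hdense T.continuous (0 : X →L[ℝ] Y).continuous ?_
        rintro _ ⟨a, ha, b, hb, rfl⟩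
        simp [hT a ha, hT b hb]
      exact DFunLike.coe_injective hext
    · rintro _ rfl
      exact ⟨fun x _ => by simpa using h0y, fun x _ => by simpa using h0y⟩
end

section
/- Let X and Y be pre-ordered Banach spaces with closed cones and α, β > 0. If X is approximately α-conormal and Y is β-normal, then B(X,Y) is (2α+1)β-normal: for all T, S ∈ B(X,Y), 0 ≤ T ≤ S implies ‖T‖ ≤ (2α+1)β‖S‖. -/
/-! On the cone, `0 ≤ T c ≤ S c` and normality of `Y` give `‖T c‖ ≤ β ‖S‖ ‖c‖`. Conormality of `X`
writes any `x` as a difference `a - (a - x)` of cone elements with `‖a‖` at most about `α ‖x‖`, so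
`‖a‖ + ‖a - x‖` is at most about `(2 α + 1) ‖x‖`. -/

/-- If `X` is approximately `α`-conormal and `Y` is `β`-normal,
then `B(X,Y)` is `(2α+1)β`-normal. -/
theorem stmt_4
    {X : Type*} [NormedAddCommGroup X] [NormedSpace ℝ X] [CompleteSpace X]
    {Y : Type*} [NormedAddCommGroup Y] [NormedSpace ℝ Y] [CompleteSpace Y]
    (Cx : Set X) (hCx_closed : IsClosed Cx)
    (hCx_add : ∀ a ∈ Cx, ∀ b ∈ Cx, a + b ∈ Cx)
    (hCx_smul : ∀ r : ℝ, 0 ≤ r → ∀ a ∈ Cx, r • a ∈ Cx)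
    (Cy : Set Y) (hCy_closed : IsClosed Cy)
    (hCy_add : ∀ a ∈ Cy, ∀ b ∈ Cy, a + b ∈ Cy)
    (hCy_smul : ∀ r : ℝ, 0 ≤ r → ∀ a ∈ Cy, r • a ∈ Cy)
    (α β : ℝ) (hα : 0 < α) (hβ : 0 < β)
    (hXconormal : ∀ x : X, ∀ ε : ℝ, 0 < ε →
      ∃ a, a ∈ Cx ∧ a - x ∈ Cx ∧ ‖a‖ < α * ‖x‖ + ε)
    (hYnormal : ∀ x y : Y, x ∈ Cy → y - x ∈ Cy → ‖x‖ ≤ β * ‖y‖) :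
    ∀ T S : X →L[ℝ] Y, (∀ x ∈ Cx, T x ∈ Cy) → (∀ x ∈ Cx, (S - T) x ∈ Cy) →
      ‖T‖ ≤ (2 * α + 1) * β * ‖S‖ := by
  intro T S hT hST
  have key : ∀ c ∈ Cx, ‖T c‖ ≤ β * (‖S‖ * ‖c‖) := fun c hc =>
    (hYnormal (T c) (S c) (hT c hc) (hST c hc)).trans
      (mul_le_mul_of_nonneg_left (S.le_opNorm c) hβ.le)
  have hK : 0 ≤ β * ‖S‖ := by positivity
  refine T.opNorm_le_bound (by positivity) fun x => ?_
  refine le_of_forall_pos_le_add fun ε hε => ?_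
  -- This `δ` makes the total error `2 * (β * ‖S‖) * δ` at most `ε`, also when `S = 0`.
  set δ : ℝ := ε / (2 * (β * ‖S‖) + 1) with hδ
  have hδ0 : 0 < δ := by positivity
  have hδε : (2 * (β * ‖S‖) + 1) * δ = ε := by rw [hδ]; field_simp
  obtain ⟨a, ha, hax, han⟩ := hXconormal x δ hδ0
  have h1 : ‖T x‖ ≤ ‖T a‖ + ‖T (a - x)‖ := by
    calc ‖T x‖ = ‖T a - T (a - x)‖ := by simp
      _ ≤ _ := norm_sub_le _ _
  have h2 : ‖a‖ + ‖a - x‖ ≤ (2 * α + 1) * ‖x‖ + 2 * δ := by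
    linarith [norm_sub_le a x]
  have h3 := mul_le_mul_of_nonneg_left h2 hK
  linarith [key a ha, key (a - x) hax]
end

section
/- Let X and Y be pre-ordered Banach spaces with closed cones and α, β > 0. If X is approximately α-absolutely conormal and Y is β-absolutely normal, then B(X,Y) is αβ-absolutely normal: for all T, S ∈ B(X,Y), ±T ≤ S implies ‖T‖ ≤ αβ‖S‖. -/
/-!
If `±x ≤ a`, then `±T x ≤ S a`, because `2 (S a ± T x)` is the sum of `(S ± T) (a + x)` and
`(S ∓ T) (a - x)`, both positive. Normality of `Y` then gives `‖T x‖ ≤ β ‖S‖ ‖a‖`, and conormality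
of `X` lets `‖a‖` come arbitrarily close to `α ‖x‖`.
-/

/-- If `X` is approximately `α`-absolutely conormal and `Y` is `β`-absolutely
normal, then `B(X,Y)` is `αβ`-absolutely normal. -/
theorem stmt_5
    {X : Type*} [NormedAddCommGroup X] [NormedSpace ℝ X] [CompleteSpace X]
    {Y : Type*} [NormedAddCommGroup Y] [NormedSpace ℝ Y] [CompleteSpace Y]
    (Cx : Set X) (hCx_closed : IsClosed Cx)
    (hCx_add : ∀ a ∈ Cx, ∀ b ∈ Cx, a + b ∈ Cx)
    (hCx_smul : ∀ r : ℝ, 0 ≤ r → ∀ a ∈ Cx, r • a ∈ Cx)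
    (Cy : Set Y) (hCy_closed : IsClosed Cy)
    (hCy_add : ∀ a ∈ Cy, ∀ b ∈ Cy, a + b ∈ Cy)
    (hCy_smul : ∀ r : ℝ, 0 ≤ r → ∀ a ∈ Cy, r • a ∈ Cy)
    (α β : ℝ) (hα : 0 < α) (hβ : 0 < β)
    (hXconormal : ∀ x : X, ∀ ε : ℝ, 0 < ε →
      ∃ a, a ∈ Cx ∧ a - x ∈ Cx ∧ a + x ∈ Cx ∧ ‖a‖ < α * ‖x‖ + ε)
    (hYnormal : ∀ x y : Y, y - x ∈ Cy → y + x ∈ Cy → ‖x‖ ≤ β * ‖y‖) :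
    ∀ T S : X →L[ℝ] Y, (∀ x ∈ Cx, (S - T) x ∈ Cy) → (∀ x ∈ Cx, (S + T) x ∈ Cy) →
      ‖T‖ ≤ α * β * ‖S‖ := by
  intro T S hsub hadd
  refine T.opNorm_le_bound (by positivity) fun x => ?_
  have key : ∀ ε : ℝ, 0 < ε → ‖T x‖ ≤ β * (‖S‖ * (α * ‖x‖ + ε)) := by
    intro ε hε
    obtain ⟨a, -, ham, hap, hlt⟩ := hXconormal x ε hε
    have h1 : S a - T x ∈ Cy := by
      have h := hCy_smul (1 / 2) (by norm_num) _
        (hCy_add _ (hsub _ hap) _ (hadd _ ham))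
      convert h using 1
      simp only [sub_apply, add_apply, map_add, map_sub]
      module
    have h2 : S a + T x ∈ Cy := by
      have h := hCy_smul (1 / 2) (by norm_num) _
        (hCy_add _ (hadd _ hap) _ (hsub _ ham))
      convert h using 1
      simp only [sub_apply, add_apply, map_add, map_sub]
      module
    calc ‖T x‖ ≤ β * ‖S a‖ := hYnormal _ _ h1 h2
      _ ≤ β * (‖S‖ * ‖a‖) := by gcongr; exact S.le_opNorm a
      _ ≤ β * (‖S‖ * (α * ‖x‖ + ε)) := by gcongr
  refine le_of_forall_pos_le_add fun δ hδ => ?_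
  -- The `+ 1` keeps the denominator nonzero when `S = 0`.
  have hc : 0 < β * ‖S‖ + 1 := by positivity
  have hk := key (δ / (β * ‖S‖ + 1)) (by positivity)
  have hd : δ / (β * ‖S‖ + 1) * (β * ‖S‖ + 1) = δ := div_mul_cancel₀ _ hc.ne'
  have hp : 0 < δ / (β * ‖S‖ + 1) := by positivity
  nlinarith
end

section
/- Let X and Y be pre-ordered Banach spaces with closed cones and α, β > 0, and let X be approximately α-sum-conormal. If Y is β-normal, then B(X,Y) is αβ-normal; if Y is β-absolutely normal, then B(X,Y) is αβ-absolutely normal; if Y is β-max-normal, then B(X,Y) is αβ-max-normal; and if Y is β-sum-normal, then B(X,Y) is αβ-sum-normal. -/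
/-!
The four statements share one mechanism. If `‖T a‖ ≤ K ‖a‖` for all `a` in the cone of `X`, then
writing `x = a - b` with `a`, `b` in the cone and `‖a‖ + ‖b‖ < α ‖x‖ + ε` gives
`‖T x‖ ≤ K (‖a‖ + ‖b‖) ≤ K (α ‖x‖ + ε)`, so `‖T‖ ≤ α K` (`opNorm_le_of_bound_on_cone`).
For `a` in the cone, the order relations between operators become the same relations between
their values at `a`, and each normality property of `Y` supplies the bound on the cone, with `K`
equal to `β` times `‖S‖`, `max ‖S‖ ‖U‖` or `‖S‖ + ‖U‖`.
-/

/-- In an approximately `α`-sum-conormal space, a bound for an operator on the cone is a bound on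
the whole space up to the factor `α`. -/
theorem opNorm_le_of_bound_on_cone
    {X : Type*} [NormedAddCommGroup X] [NormedSpace ℝ X]
    {Y : Type*} [NormedAddCommGroup Y] [NormedSpace ℝ Y]
    {Cx : Set X} {α : ℝ} (hα : 0 < α)
    (hX : ∀ x : X, ∀ ε : ℝ, 0 < ε →
      ∃ a ∈ Cx, ∃ b ∈ Cx, x = a - b ∧ ‖a‖ + ‖b‖ < α * ‖x‖ + ε)
    {T : X →L[ℝ] Y} {K : ℝ} (hK : 0 ≤ K) (hT : ∀ a ∈ Cx, ‖T a‖ ≤ K * ‖a‖) :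
    ‖T‖ ≤ α * K := by
  refine T.opNorm_le_bound (by positivity) fun x => le_of_forall_pos_le_add fun ε hε => ?_
  -- `K + 1` replaces `K` as the divisor because `K` may vanish.
  obtain ⟨a, ha, b, hb, hx, hab⟩ := hX x (ε / (K + 1)) (by positivity)
  have hKε : K * (ε / (K + 1)) ≤ ε := by
    rw [← mul_div_assoc, div_le_iff₀ (by positivity)]
    nlinarith
  calc ‖T x‖ = ‖T a - T b‖ := by rw [hx, map_sub]
    _ ≤ ‖T a‖ + ‖T b‖ := norm_sub_le _ _
    _ ≤ K * (‖a‖ + ‖b‖) := by linarith [hT a ha, hT b hb]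
    _ ≤ K * (α * ‖x‖ + ε / (K + 1)) := by gcongr
    _ ≤ α * K * ‖x‖ + ε := by linarith

/-- If `X` is approximately `α`-sum-conormal, then: `Y` `β`-normal implies
`B(X,Y)` `αβ`-normal; `Y` `β`-absolutely normal implies `B(X,Y)` `αβ`-absolutely normal;
`Y` `β`-max-normal implies `B(X,Y)` `αβ`-max-normal; and `Y` `β`-sum-normal implies
`B(X,Y)` `αβ`-sum-normal. -/
theorem stmt_6
    {X : Type*} [NormedAddCommGroup X] [NormedSpace ℝ X] [CompleteSpace X]
    {Y : Type*} [NormedAddCommGroup Y] [NormedSpace ℝ Y] [CompleteSpace Y]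
    (Cx : Set X) (hCx_closed : IsClosed Cx)
    (hCx_add : ∀ a ∈ Cx, ∀ b ∈ Cx, a + b ∈ Cx)
    (hCx_smul : ∀ r : ℝ, 0 ≤ r → ∀ a ∈ Cx, r • a ∈ Cx)
    (Cy : Set Y) (hCy_closed : IsClosed Cy)
    (hCy_add : ∀ a ∈ Cy, ∀ b ∈ Cy, a + b ∈ Cy)
    (hCy_smul : ∀ r : ℝ, 0 ≤ r → ∀ a ∈ Cy, r • a ∈ Cy)
    (α β : ℝ) (hα : 0 < α) (hβ : 0 < β)
    (hXsumconormal : ∀ x : X, ∀ ε : ℝ, 0 < ε →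
      ∃ a ∈ Cx, ∃ b ∈ Cx, x = a - b ∧ ‖a‖ + ‖b‖ < α * ‖x‖ + ε) :
    ((∀ x y : Y, x ∈ Cy → y - x ∈ Cy → ‖x‖ ≤ β * ‖y‖) →
      ∀ T S : X →L[ℝ] Y, (∀ x ∈ Cx, T x ∈ Cy) → (∀ x ∈ Cx, (S - T) x ∈ Cy) →
        ‖T‖ ≤ α * β * ‖S‖)
    ∧ ((∀ x y : Y, y - x ∈ Cy → y + x ∈ Cy → ‖x‖ ≤ β * ‖y‖) →
      ∀ T S : X →L[ℝ] Y, (∀ x ∈ Cx, (S - T) x ∈ Cy) → (∀ x ∈ Cx, (S + T) x ∈ Cy) →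
        ‖T‖ ≤ α * β * ‖S‖)
    ∧ ((∀ x y z : Y, x - z ∈ Cy → y - x ∈ Cy → ‖x‖ ≤ β * max ‖y‖ ‖z‖) →
      ∀ T S U : X →L[ℝ] Y, (∀ x ∈ Cx, (T - U) x ∈ Cy) → (∀ x ∈ Cx, (S - T) x ∈ Cy) →
        ‖T‖ ≤ α * β * max ‖S‖ ‖U‖)
    ∧ ((∀ x y z : Y, x - z ∈ Cy → y - x ∈ Cy → ‖x‖ ≤ β * (‖y‖ + ‖z‖)) →
      ∀ T S U : X →L[ℝ] Y, (∀ x ∈ Cx, (T - U) x ∈ Cy) → (∀ x ∈ Cx, (S - T) x ∈ Cy) →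
        ‖T‖ ≤ α * β * (‖S‖ + ‖U‖)) := by
  refine ⟨fun hY T S h₁ h₂ => ?_, fun hY T S h₁ h₂ => ?_, fun hY T S U h₁ h₂ => ?_,
    fun hY T S U h₁ h₂ => ?_⟩ <;> rw [mul_assoc] <;>
    refine opNorm_le_of_bound_on_cone hα hXsumconormal (by positivity) fun a ha => ?_
  · refine (hY (T a) (S a) (h₁ a ha) (h₂ a ha)).trans ?_
    rw [mul_assoc]
    gcongr
    exact S.le_opNorm a
  · refine (hY (T a) (S a) (h₁ a ha) (h₂ a ha)).trans ?_
    rw [mul_assoc]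
    gcongr
    exact S.le_opNorm a
  · refine (hY (T a) (S a) (U a) (h₁ a ha) (h₂ a ha)).trans ?_
    rw [mul_assoc, max_mul_of_nonneg _ _ (norm_nonneg a)]
    gcongr
    exacts [S.le_opNorm a, U.le_opNorm a]
  · refine (hY (T a) (S a) (U a) (h₁ a ha) (h₂ a ha)).trans ?_
    rw [mul_assoc, add_mul]
    gcongr
    exacts [S.le_opNorm a, U.le_opNorm a]
end

section
/- If X is a pre-ordered Banach space with a closed generating cone and Y is a real Banach space, then the Robinson norm ‖·‖₊ is equivalent to the operator norm on B(X,Y): there exists α > 0 such that ‖T‖₊ ≤ ‖T‖ ≤ 2α‖T‖₊ for all T ∈ B(X,Y). -/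
/-!
The bound `‖T‖ ≤ 2α‖T‖₊` follows from the uniform boundedness principle. Consider the family of all
`T` with `‖T c‖ ≤ ‖c‖` for every `c` in the cone. Since the cone is generating, each `x` is `a - b`
with `a`, `b` in the cone, so `‖T x‖ ≤ ‖a‖ + ‖b‖` throughout the family. Pointwise boundedness on the
Banach space `X` gives a common bound on the operator norms, and scaling `T` by `‖T‖₊⁻¹` puts it
into the family.
-/

/-- If `X` is a pre-ordered Banach space with a closed generating cone and
`Y` a Banach space, then the Robinson norm `‖T‖₊ = sup {‖Tx‖ : x ∈ C, ‖x‖ = 1}` is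
equivalent to the operator norm: there is `α > 0` with
`‖T‖₊ ≤ ‖T‖ ≤ 2α‖T‖₊` for all `T`. -/
theorem stmt_7
    {X : Type*} [NormedAddCommGroup X] [NormedSpace ℝ X] [CompleteSpace X]
    {Y : Type*} [NormedAddCommGroup Y] [NormedSpace ℝ Y] [CompleteSpace Y]
    (C : Set X) (hC_closed : IsClosed C)
    (hC_add : ∀ a ∈ C, ∀ b ∈ C, a + b ∈ C)
    (hC_smul : ∀ r : ℝ, 0 ≤ r → ∀ a ∈ C, r • a ∈ C)
    (hC_gen : ∀ x : X, ∃ a ∈ C, ∃ b ∈ C, x = a - b) :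
    ∃ α : ℝ, 0 < α ∧ ∀ T : X →L[ℝ] Y,
      sSup {r : ℝ | ∃ x, x ∈ C ∧ ‖x‖ = 1 ∧ r = ‖T x‖} ≤ ‖T‖ ∧
      ‖T‖ ≤ 2 * α * sSup {r : ℝ | ∃ x, x ∈ C ∧ ‖x‖ = 1 ∧ r = ‖T x‖} := by
  obtain ⟨M, hM⟩ : ∃ M, ∀ T : {T : X →L[ℝ] Y // ∀ c ∈ C, ‖T c‖ ≤ ‖c‖}, ‖T.1‖ ≤ M := by
    refine banach_steinhaus fun x => ?_
    obtain ⟨a, ha, b, hb, rfl⟩ := hC_gen x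
    refine ⟨‖a‖ + ‖b‖, fun T => ?_⟩
    rw [map_sub]
    exact (norm_sub_le _ _).trans (add_le_add (T.2 a ha) (T.2 b hb))
  refine ⟨(|M| + 1) / 2, by positivity, fun T => ?_⟩
  have hle : ∀ r ∈ {r : ℝ | ∃ x, x ∈ C ∧ ‖x‖ = 1 ∧ r = ‖T x‖}, r ≤ ‖T‖ := by
    rintro r ⟨x, -, hx, rfl⟩
    simpa [hx] using T.le_opNorm x
  refine ⟨Real.sSup_le hle (norm_nonneg T), ?_⟩
  have hs0 : 0 ≤ sSup {r : ℝ | ∃ x, x ∈ C ∧ ‖x‖ = 1 ∧ r = ‖T x‖} := by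
    refine Real.sSup_nonneg ?_
    rintro r ⟨x, -, -, rfl⟩
    exact norm_nonneg _
  have hsup := fun r hr => le_csSup (a := r) ⟨‖T‖, hle⟩ hr
  generalize sSup {r : ℝ | ∃ x, x ∈ C ∧ ‖x‖ = 1 ∧ r = ‖T x‖} = s at hs0 hsup ⊢
  have hcone : ∀ c ∈ C, ‖T c‖ ≤ s * ‖c‖ := by
    intro c hc
    rcases eq_or_ne c 0 with rfl | hc0
    · simp
    have hpos : 0 < ‖c‖ := norm_pos_iff.mpr hc0
    have h := hsup ‖T (‖c‖⁻¹ • c)‖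
      ⟨_, hC_smul _ (by positivity) c hc, norm_smul_inv_norm hc0, rfl⟩
    rw [map_smul, norm_smul, norm_inv, norm_norm, inv_mul_le_iff₀ hpos] at h
    linarith
  rcases hs0.eq_or_lt with rfl | hs
  · -- If `‖T‖₊ = 0`, then `T` vanishes on the cone, hence everywhere.
    have hT : T = 0 := by
      ext x
      obtain ⟨a, ha, b, hb, rfl⟩ := hC_gen x
      have h1 : T a = 0 := by simpa using hcone a ha
      have h2 : T b = 0 := by simpa using hcone b hb
      simp [h1, h2]
    simp [hT]
  · have h := hM ⟨s⁻¹ • T, fun c hc => by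
      rw [ContinuousLinearMap.smul_apply, norm_smul, norm_inv, Real.norm_of_nonneg hs0,
        inv_mul_le_iff₀ hs]
      exact hcone c hc⟩
    rw [norm_smul, norm_inv, Real.norm_of_nonneg hs0, inv_mul_le_iff₀ hs] at h
    nlinarith [le_abs_self M]
end

section
/- Let X and Y be pre-ordered Banach spaces with closed cones, with Y α-normal for some α > 0. If the operator norm on B(X,Y) is positively attained, then B(X,Y) is α-normal: for all T, S ∈ B(X,Y), 0 ≤ T ≤ S implies ‖T‖ ≤ α‖S‖. -/
/-- If `Y` is `α`-normal and the operator norm on `B(X,Y)` is positively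
attained (`‖T‖ = ‖T‖₊` for all positive `T`), then `B(X,Y)` is `α`-normal. -/
theorem stmt_8
    {X : Type*} [NormedAddCommGroup X] [NormedSpace ℝ X] [CompleteSpace X]
    {Y : Type*} [NormedAddCommGroup Y] [NormedSpace ℝ Y] [CompleteSpace Y]
    (Cx : Set X) (hCx_closed : IsClosed Cx)
    (hCx_add : ∀ a ∈ Cx, ∀ b ∈ Cx, a + b ∈ Cx)
    (hCx_smul : ∀ r : ℝ, 0 ≤ r → ∀ a ∈ Cx, r • a ∈ Cx)
    (Cy : Set Y) (hCy_closed : IsClosed Cy)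
    (hCy_add : ∀ a ∈ Cy, ∀ b ∈ Cy, a + b ∈ Cy)
    (hCy_smul : ∀ r : ℝ, 0 ≤ r → ∀ a ∈ Cy, r • a ∈ Cy)
    (α : ℝ) (hα : 0 < α)
    (hYnormal : ∀ x y : Y, x ∈ Cy → y - x ∈ Cy → ‖x‖ ≤ α * ‖y‖)
    (hposattained : ∀ T : X →L[ℝ] Y, (∀ x ∈ Cx, T x ∈ Cy) →
      ‖T‖ = sSup {r : ℝ | ∃ x, x ∈ Cx ∧ ‖x‖ = 1 ∧ r = ‖T x‖}) :
    ∀ T S : X →L[ℝ] Y, (∀ x ∈ Cx, T x ∈ Cy) → (∀ x ∈ Cx, (S - T) x ∈ Cy) →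
      ‖T‖ ≤ α * ‖S‖ := by
  intro T S hT hST
  rw [hposattained T hT]
  -- `Real.sSup_le` also covers a cone without unit vectors, where the supremum is `0`.
  refine Real.sSup_le ?_ (by positivity)
  rintro r ⟨x, hx, hx1, rfl⟩
  calc ‖T x‖ ≤ α * ‖S x‖ := hYnormal _ _ (hT x hx) (hST x hx)
    _ ≤ α * ‖S‖ := by
      gcongr
      exact S.unit_le_opNorm x hx1.le
end

section
/- Let X and Y be pre-ordered Banach spaces with closed cones. Each of the following conditions is sufficient for the operator norm on B(X,Y) to be positively attained: (1) X is approximately 1-max-conormal and Y is 1-max-normal; (2) X is approximately 1-absolutely conormal and Y is absolutely monotone; (3) X is approximately 1-sum-conormal, in which case moreover ‖T‖ = ‖T‖₊ holds for ALL T ∈ B(X,Y). -/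
/-!
Let `S = ‖T‖₊`. By homogeneity, `‖T a‖ ≤ S * ‖a‖` for every `a` in the cone of `X`, and `S ≤ ‖T‖` is
clear. For the reverse inequality it is enough that `‖T x‖ ≤ S * (‖x‖ + ε)` for all `x` and `ε > 0`
(`opNorm_eq_sSup_of_cone`). In each case this comes from a nearly optimal conormality witness:

* if `x = a - b` with `a, b ≥ 0` and `T ≥ 0`, then `-T b ≤ T x ≤ T a`, and max-normality of `Y` applies;
* if `±x ≤ a` and `T ≥ 0`, then `±T x ≤ T a`, and absolute monotonicity of `Y` applies;
* if `x = a - b` with `‖a‖ + ‖b‖ < ‖x‖ + ε`, the triangle inequality gives the bound for every `T`.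
-/

/-- The operator norm is the supremum over norm-one elements of the cone as soon as every bound for
`T` on the cone extends, up to an arbitrarily small error, to the whole space. If the cone has no
norm-one element, the supremum is `sSup ∅ = 0`, which is the correct value since the cone is then
contained in `{0}`. -/
theorem opNorm_eq_sSup_of_cone
    {X : Type*} [NormedAddCommGroup X] [NormedSpace ℝ X]
    {Y : Type*} [NormedAddCommGroup Y] [NormedSpace ℝ Y]
    (C : Set X) (hC_smul : ∀ r : ℝ, 0 ≤ r → ∀ a ∈ C, r • a ∈ C) (T : X →L[ℝ] Y)
    (h : ∀ S : ℝ, 0 ≤ S → (∀ a ∈ C, ‖T a‖ ≤ S * ‖a‖) →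
      ∀ x : X, ∀ ε : ℝ, 0 < ε → ‖T x‖ ≤ S * (‖x‖ + ε)) :
    ‖T‖ = sSup {r : ℝ | ∃ x, x ∈ C ∧ ‖x‖ = 1 ∧ r = ‖T x‖} := by
  set A : Set ℝ := {r : ℝ | ∃ x, x ∈ C ∧ ‖x‖ = 1 ∧ r = ‖T x‖} with hA
  have hle : ∀ r ∈ A, r ≤ ‖T‖ := by
    rintro r ⟨x, -, hx, rfl⟩
    simpa [hx] using T.le_opNorm x
  have hS : 0 ≤ sSup A := Real.sSup_nonneg (by rintro r ⟨x, -, -, rfl⟩; exact norm_nonneg _)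
  have hcone : ∀ a ∈ C, ‖T a‖ ≤ sSup A * ‖a‖ := by
    intro a ha
    rcases eq_or_ne a 0 with rfl | h0
    · simp
    have hpos : 0 < ‖a‖ := norm_pos_iff.mpr h0
    have hmem : ‖T (‖a‖⁻¹ • a)‖ ∈ A :=
      ⟨_, hC_smul _ (inv_nonneg.mpr hpos.le) a ha, norm_smul_inv_norm (𝕜 := ℝ) h0, rfl⟩
    have hb := le_csSup ⟨‖T‖, hle⟩ hmem
    rw [map_smul, norm_smul, norm_inv, norm_norm, inv_mul_le_iff₀ hpos] at hb
    linarith [mul_comm ‖a‖ (sSup A)]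
  apply le_antisymm
  · refine T.opNorm_le_bound hS fun x => ?_
    have key := h _ hS hcone x
    -- Letting `ε` tend to `0` by continuity also covers the case `sSup A = 0`.
    have hlim : Filter.Tendsto (fun ε : ℝ => sSup A * (‖x‖ + ε)) (nhdsWithin 0 (Set.Ioi 0))
        (nhds (sSup A * (‖x‖ + 0))) :=
      ((by fun_prop : Continuous fun ε : ℝ => sSup A * (‖x‖ + ε)).tendsto 0).mono_left
        nhdsWithin_le_nhds
    rw [add_zero] at hlim
    exact ge_of_tendsto hlim (Filter.eventually_of_mem self_mem_nhdsWithin key)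
  · exact Real.sSup_le hle (norm_nonneg _)

/-- Sufficient conditions for the operator norm on `B(X,Y)` to be
positively attained: (1) `X` approximately `1`-max-conormal and `Y` `1`-max-normal;
(2) `X` approximately `1`-absolutely conormal and `Y` absolutely monotone;
(3) `X` approximately `1`-sum-conormal, in which case `‖T‖ = ‖T‖₊` for ALL `T`. -/
theorem stmt_10
    {X : Type*} [NormedAddCommGroup X] [NormedSpace ℝ X] [CompleteSpace X]
    {Y : Type*} [NormedAddCommGroup Y] [NormedSpace ℝ Y] [CompleteSpace Y]
    (Cx : Set X) (hCx_closed : IsClosed Cx)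
    (hCx_add : ∀ a ∈ Cx, ∀ b ∈ Cx, a + b ∈ Cx)
    (hCx_smul : ∀ r : ℝ, 0 ≤ r → ∀ a ∈ Cx, r • a ∈ Cx)
    (Cy : Set Y) (hCy_closed : IsClosed Cy)
    (hCy_add : ∀ a ∈ Cy, ∀ b ∈ Cy, a + b ∈ Cy)
    (hCy_smul : ∀ r : ℝ, 0 ≤ r → ∀ a ∈ Cy, r • a ∈ Cy) :
    (((∀ x : X, ∀ ε : ℝ, 0 < ε →
          ∃ a ∈ Cx, ∃ b ∈ Cx, x = a - b ∧ max ‖a‖ ‖b‖ < ‖x‖ + ε) ∧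
       (∀ x y z : Y, x - z ∈ Cy → y - x ∈ Cy → ‖x‖ ≤ max ‖y‖ ‖z‖)) →
      ∀ T : X →L[ℝ] Y, (∀ x ∈ Cx, T x ∈ Cy) →
        ‖T‖ = sSup {r : ℝ | ∃ x, x ∈ Cx ∧ ‖x‖ = 1 ∧ r = ‖T x‖})
    ∧ (((∀ x : X, ∀ ε : ℝ, 0 < ε →
          ∃ a, a ∈ Cx ∧ a - x ∈ Cx ∧ a + x ∈ Cx ∧ ‖a‖ < ‖x‖ + ε) ∧
       (∀ x y : Y, y - x ∈ Cy → y + x ∈ Cy → ‖x‖ ≤ ‖y‖)) →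
      ∀ T : X →L[ℝ] Y, (∀ x ∈ Cx, T x ∈ Cy) →
        ‖T‖ = sSup {r : ℝ | ∃ x, x ∈ Cx ∧ ‖x‖ = 1 ∧ r = ‖T x‖})
    ∧ ((∀ x : X, ∀ ε : ℝ, 0 < ε →
          ∃ a ∈ Cx, ∃ b ∈ Cx, x = a - b ∧ ‖a‖ + ‖b‖ < ‖x‖ + ε) →
      ∀ T : X →L[ℝ] Y,
        ‖T‖ = sSup {r : ℝ | ∃ x, x ∈ Cx ∧ ‖x‖ = 1 ∧ r = ‖T x‖}) := by
  refine ⟨?_, ?_, ?_⟩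
  · rintro ⟨hX, hY⟩ T hT
    refine opNorm_eq_sSup_of_cone Cx hCx_smul T fun S hS hb x ε hε => ?_
    obtain ⟨a, ha, b, hb', rfl, hab⟩ := hX x ε hε
    have h1 := hY (T (a - b)) (T a) (-T b) (by simpa using hT a ha) (by simpa using hT b hb')
    rw [norm_neg] at h1
    refine h1.trans (max_le ?_ ?_)
    · exact (hb a ha).trans
        (mul_le_mul_of_nonneg_left ((le_max_left _ _).trans hab.le) hS)
    · exact (hb b hb').trans
        (mul_le_mul_of_nonneg_left ((le_max_right _ _).trans hab.le) hS)
  · rintro ⟨hX, hY⟩ T hT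
    refine opNorm_eq_sSup_of_cone Cx hCx_smul T fun S hS hb x ε hε => ?_
    obtain ⟨a, ha, hsub, hadd, hax⟩ := hX x ε hε
    have h1 := hY (T x) (T a) (by simpa using hT _ hsub) (by simpa using hT _ hadd)
    exact h1.trans ((hb a ha).trans (mul_le_mul_of_nonneg_left hax.le hS))
  · intro hX T
    refine opNorm_eq_sSup_of_cone Cx hCx_smul T fun S hS hb x ε hε => ?_
    obtain ⟨a, ha, b, hb', rfl, hab⟩ := hX x ε hε
    calc ‖T (a - b)‖ ≤ ‖T a‖ + ‖T b‖ := by rw [map_sub]; exact norm_sub_le _ _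
      _ ≤ S * (‖a‖ + ‖b‖) := by rw [mul_add]; exact add_le_add (hb a ha) (hb b hb')
      _ ≤ S * (‖a - b‖ + ε) := mul_le_mul_of_nonneg_left hab.le hS
end

section
/- If X is an υ-quasi-lattice or a μ-quasi-lattice, then the cone X₊ is proper (X₊ ∩ (−X₊) = {0}) and generating (X = X₊ − X₊). -/
/-!
Generating: an upper bound `z` of `{x, 0}` gives `x = z - (z - x)`.

Proper: let `x` and `-x` both lie in the cone. In an `υ`-quasi-lattice, `x` and `0` are both
upper bounds of `{x, -x}` at which `σ_{x,-x}` takes the value `2‖x‖`, a lower bound for it by the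
triangle inequality; uniqueness of the minimizer gives `x = 0`. In a `μ`-quasi-lattice, take a
minimal upper bound `z` of `{0, 0}`: then `z + x` is an upper bound below `z`, so `x = 0`.
-/

/-- If `X` is an `υ`-quasi-lattice or a `μ`-quasi-lattice, then its cone is
proper and generating. Here, for `x y : X`, the upper bounds of `{x,y}` are
`{z | z - x ∈ C ∧ z - y ∈ C}`, the minimal upper bounds are those upper bounds `z` such
that any upper bound `w` with `w ≤ z` equals `z`, and `σ_{x,y}(z) = ‖z - x‖ + ‖z - y‖`. -/
theorem stmt_11
    {X : Type*} [NormedAddCommGroup X] [NormedSpace ℝ X] [CompleteSpace X]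
    (C : Set X) (hC_closed : IsClosed C)
    (hC_add : ∀ a ∈ C, ∀ b ∈ C, a + b ∈ C)
    (hC_smul : ∀ r : ℝ, 0 ≤ r → ∀ a ∈ C, r • a ∈ C)
    (hquasi :
      -- υ-quasi-lattice
      (∀ x y : X, ∃! z : X,
        (z - x ∈ C ∧ z - y ∈ C) ∧
        ∀ w : X, (w - x ∈ C ∧ w - y ∈ C) →
          ‖z - x‖ + ‖z - y‖ ≤ ‖w - x‖ + ‖w - y‖)
      ∨
      -- μ-quasi-lattice
      (∀ x y : X, ∃! z : X,
        ((z - x ∈ C ∧ z - y ∈ C) ∧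
          ∀ w : X, (w - x ∈ C ∧ w - y ∈ C) → z - w ∈ C → w = z) ∧
        ∀ w : X, ((w - x ∈ C ∧ w - y ∈ C) ∧
            ∀ u : X, (u - x ∈ C ∧ u - y ∈ C) → w - u ∈ C → u = w) →
          ‖z - x‖ + ‖z - y‖ ≤ ‖w - x‖ + ‖w - y‖)) :
    C ∩ (-C) = {0} ∧ ∀ x : X, ∃ a ∈ C, ∃ b ∈ C, x = a - b := by
  have hub : ∀ x y : X, ∃ z : X, z - x ∈ C ∧ z - y ∈ C := by
    intro x y
    rcases hquasi with h | h
    · obtain ⟨z, hz, -⟩ := h x y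
      exact ⟨z, hz.1⟩
    · obtain ⟨z, hz, -⟩ := h x y
      exact ⟨z, hz.1.1⟩
  have h0 : (0 : X) ∈ C := by
    obtain ⟨z, hz, -⟩ := hub 0 0
    simpa using hC_smul 0 le_rfl _ hz
  refine ⟨?_, fun x => ?_⟩
  · ext x
    rw [Set.mem_inter_iff, Set.mem_neg, Set.mem_singleton_iff]
    refine ⟨fun ⟨hx, hnx⟩ => ?_, fun hx => by simpa [hx] using h0⟩
    rcases hquasi with h | h
    · have htri : ∀ w : X, ‖x + x‖ ≤ ‖w - x‖ + ‖w - -x‖ := fun w => by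
        have := norm_sub_le (w - -x) (w - x)
        rw [show w - -x - (w - x) = x + x by abel] at this
        linarith
      have hnorm : ‖x + x‖ = ‖x‖ + ‖x‖ := by
        rw [← two_smul ℝ x, norm_smul, Real.norm_ofNat]
        ring
      refine (h x (-x)).unique ⟨⟨?_, ?_⟩, fun w _ => ?_⟩ ⟨⟨?_, ?_⟩, fun w _ => ?_⟩
      · simpa using h0
      · simpa using hC_add x hx x hx
      · simpa using htri w
      · simpa using hnx
      · simpa using hx
      · have := htri w
        rw [hnorm] at this
        simpa using this
    · obtain ⟨z, ⟨⟨⟨hz, -⟩, hmin⟩, -⟩, -⟩ := h 0 0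
      have hzx : z + x - 0 ∈ C := by
        simpa using hC_add _ hz x hx
      have := hmin (z + x) ⟨hzx, hzx⟩ (by simpa using hnx)
      simpa using this
  · obtain ⟨z, hzx, hz⟩ := hub x 0
    exact ⟨z, by simpa using hz, z - x, hzx, by abel⟩
end

section
/- Let X be an υ-quasi-lattice, with quasi-supremum x∨̃y, quasi-infimum x∧̃y := −((−x)∨̃(−y)), x⁺ := 0∨̃x, x⁻ := 0∨̃(−x), and quasi-absolute value ⌈x⌉ := (−x)∨̃x. Then for all x, y, z ∈ X and all α ≥ 0: x∨̃x = x; (αx)∨̃(αy) = α(x∨̃y); (x∨̃y) + z = (x+z)∨̃(y+z); x = x⁺ − x⁻; x⁺∧̃x⁻ = 0; ⌈x⌉ = x⁺ + x⁻; x∨̃y + x∧̃y = x + y; x∨̃y − x∧̃y = ⌈x − y⌉; and x∨̃y = ½(x+y) + ½⌈x − y⌉. -/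
/-!
The defining property of the quasi-supremum (upper bound, minimal `σ`, unique as such) is symmetric in
the two points and compatible with translations and with positive dilations. By uniqueness, `qsup`
is therefore commutative, translation equivariant and positively homogeneous, and `qsup x x = x`
because `σ_{x,x}` vanishes at `x`. The remaining identities are formal consequences of these
four: for instance `x⁺ - x = (-x) ∨̃ 0 = x⁻` and `⌈x⌉ = (0 ∨̃ 2x) - x = 2x⁺ - x = x⁺ + x⁻`.
-/

/-- Basic identities in an `υ`-quasi-lattice. The function
`qsup x y` is the quasi-supremum: the unique upper bound of `{x,y}` minimizing
`σ_{x,y}(z) = ‖z - x‖ + ‖z - y‖` over all upper bounds. With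
`x ∧̃ y := -((-x) ∨̃ (-y))`, `x⁺ := 0 ∨̃ x`, `x⁻ := 0 ∨̃ (-x)` and `⌈x⌉ := (-x) ∨̃ x`,
the listed vector lattice identities hold. -/
theorem stmt_12
    {X : Type*} [NormedAddCommGroup X] [NormedSpace ℝ X] [CompleteSpace X]
    (C : Set X) (hC_closed : IsClosed C)
    (hC_add : ∀ a ∈ C, ∀ b ∈ C, a + b ∈ C)
    (hC_smul : ∀ r : ℝ, 0 ≤ r → ∀ a ∈ C, r • a ∈ C)
    (qsup : X → X → X)
    (hqsup : ∀ x y : X,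
      ((qsup x y - x ∈ C ∧ qsup x y - y ∈ C) ∧
        ∀ w : X, (w - x ∈ C ∧ w - y ∈ C) →
          ‖qsup x y - x‖ + ‖qsup x y - y‖ ≤ ‖w - x‖ + ‖w - y‖) ∧
      ∀ z : X, ((z - x ∈ C ∧ z - y ∈ C) ∧
          ∀ w : X, (w - x ∈ C ∧ w - y ∈ C) →
            ‖z - x‖ + ‖z - y‖ ≤ ‖w - x‖ + ‖w - y‖) → z = qsup x y) :
    ∀ x y z : X, ∀ r : ℝ, 0 ≤ r →
      (qsup x x = x) ∧
      (qsup (r • x) (r • y) = r • qsup x y) ∧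
      (qsup x y + z = qsup (x + z) (y + z)) ∧
      (x = qsup 0 x - qsup 0 (-x)) ∧
      (-(qsup (-(qsup 0 x)) (-(qsup 0 (-x)))) = 0) ∧
      (qsup (-x) x = qsup 0 x + qsup 0 (-x)) ∧
      (qsup x y + (-(qsup (-x) (-y))) = x + y) ∧
      (qsup x y - (-(qsup (-x) (-y))) = qsup (-(x - y)) (x - y)) ∧
      (qsup x y = (1 / 2 : ℝ) • (x + y) + (1 / 2 : ℝ) • qsup (-(x - y)) (x - y)) := by
  -- The cone is nonempty because upper bounds exist, so it contains `0`.
  have zero_mem : (0 : X) ∈ C := by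
    simpa using hC_smul 0 le_rfl _ (hqsup 0 0).1.1.1
  have idem : ∀ x, qsup x x = x := fun x => by
    refine ((hqsup x x).2 x ⟨by simpa using zero_mem, fun w _ => ?_⟩).symm
    simp only [sub_self, norm_zero, add_zero]
    positivity
  have comm : ∀ x y, qsup x y = qsup y x := fun x y => by
    refine (hqsup y x).2 _ ⟨(hqsup x y).1.1.symm, fun w hw => ?_⟩
    have := (hqsup x y).1.2 w hw.symm
    linarith
  have trans : ∀ x y z, qsup x y + z = qsup (x + z) (y + z) := fun x y z => by
    refine (hqsup _ _).2 _ ⟨by simpa using (hqsup x y).1.1, fun w hw => ?_⟩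
    have e : ∀ a, w - z - a = w - (a + z) := fun a => by abel
    have := (hqsup x y).1.2 (w - z) (by simpa only [e] using hw)
    simpa only [e, add_sub_add_right_eq_sub] using this
  have smul : ∀ (r : ℝ), 0 ≤ r → ∀ x y, qsup (r • x) (r • y) = r • qsup x y := fun r hr x y => by
    rcases hr.eq_or_lt with rfl | hrpos
    · simp [idem]
    symm
    refine (hqsup _ _).2 _ ⟨?_, fun w hw => ?_⟩
    · simp only [← smul_sub]
      exact ⟨hC_smul r hr _ (hqsup x y).1.1.1, hC_smul r hr _ (hqsup x y).1.1.2⟩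
    -- An upper bound `w` of the dilated pair is compared through the upper bound `r⁻¹ • w` of `x, y`.
    · have e : ∀ a, r⁻¹ • w - a = r⁻¹ • (w - r • a) := fun a => by
        rw [smul_sub, inv_smul_smul₀ hrpos.ne']
      have ew : ∀ a, w - r • a = r • (r⁻¹ • w - a) := fun a => by
        rw [smul_sub, smul_inv_smul₀ hrpos.ne']
      have hi : 0 ≤ r⁻¹ := inv_nonneg.2 hr
      have := (hqsup x y).1.2 (r⁻¹ • w)
        (by rw [e, e]; exact ⟨hC_smul _ hi _ hw.1, hC_smul _ hi _ hw.2⟩)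
      rw [ew, ew, ← smul_sub, ← smul_sub]
      simp only [norm_smul, Real.norm_of_nonneg hr, ← mul_add]
      exact mul_le_mul_of_nonneg_left this hr
  have neg_part : ∀ x, qsup 0 (-x) = qsup 0 x - x := fun x => by
    rw [sub_eq_add_neg, trans, comm]
    simp
  have sup_neg : ∀ x y, qsup (-x) (-y) = qsup x y - (x + y) := fun x y => by
    rw [sub_eq_add_neg, trans, comm]
    congr 1 <;> abel
  have abs_sub : ∀ x y, qsup (-(x - y)) (x - y) = (2 : ℝ) • qsup x y - (x + y) := fun x y => by
    rw [← smul 2 zero_le_two, sub_eq_add_neg (qsup _ _), trans, comm]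
    congr 1 <;> module
  intro x y z r hr
  refine ⟨idem x, smul r hr x y, trans x y z, ?_, ?_, ?_, ?_, ?_, ?_⟩
  · rw [neg_part]; abel
  · have h := trans 0 x (-qsup 0 x)
    rw [add_neg_cancel, zero_add] at h
    rw [neg_part, neg_sub, sub_eq_add_neg, ← h, neg_zero]
  · have h := abs_sub x 0
    rw [sub_zero, add_zero, comm x 0] at h
    rw [h, neg_part]; module
  · rw [sup_neg]; abel
  · rw [sup_neg, abs_sub]; module
  · rw [abs_sub]; module
end

section
/- Let X be an υ-quasi-lattice with quasi-absolute value ⌈x⌉ := (−x)∨̃x. Then for all x, y ∈ X: both x + y ≤ ⌈x⌉ + ⌈y⌉ and −(x+y) ≤ ⌈x⌉ + ⌈y⌉ (triangle inequality); and each of x − ⌈y⌉, −x − ⌈y⌉, y − ⌈x⌉, −y − ⌈x⌉ is ≤ ⌈x + y⌉ and also ≤ ⌈x − y⌉ (reverse triangle inequality). -/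
/-- Triangle and reverse triangle inequality in an `υ`-quasi-lattice,
where `⌈x⌉ := qsup (-x) x` is the quasi-absolute value and `a ≤ b` means `b - a ∈ C`. -/
theorem stmt_13
    {X : Type*} [NormedAddCommGroup X] [NormedSpace ℝ X] [CompleteSpace X]
    (C : Set X) (hC_closed : IsClosed C)
    (hC_add : ∀ a ∈ C, ∀ b ∈ C, a + b ∈ C)
    (hC_smul : ∀ r : ℝ, 0 ≤ r → ∀ a ∈ C, r • a ∈ C)
    (qsup : X → X → X)
    (hqsup : ∀ x y : X,
      ((qsup x y - x ∈ C ∧ qsup x y - y ∈ C) ∧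
        ∀ w : X, (w - x ∈ C ∧ w - y ∈ C) →
          ‖qsup x y - x‖ + ‖qsup x y - y‖ ≤ ‖w - x‖ + ‖w - y‖) ∧
      ∀ z : X, ((z - x ∈ C ∧ z - y ∈ C) ∧
          ∀ w : X, (w - x ∈ C ∧ w - y ∈ C) →
            ‖z - x‖ + ‖z - y‖ ≤ ‖w - x‖ + ‖w - y‖) → z = qsup x y) :
    ∀ x y : X,
      -- triangle inequality: ±(x+y) ≤ ⌈x⌉ + ⌈y⌉
      ((qsup (-x) x + qsup (-y) y) - (x + y) ∈ C ∧
       (qsup (-x) x + qsup (-y) y) - (-(x + y)) ∈ C) ∧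
      -- reverse triangle inequality: each of x−⌈y⌉, −x−⌈y⌉, y−⌈x⌉, −y−⌈x⌉ is ≤ ⌈x+y⌉
      (qsup (-(x + y)) (x + y) - (x - qsup (-y) y) ∈ C ∧
       qsup (-(x + y)) (x + y) - (-x - qsup (-y) y) ∈ C ∧
       qsup (-(x + y)) (x + y) - (y - qsup (-x) x) ∈ C ∧
       qsup (-(x + y)) (x + y) - (-y - qsup (-x) x) ∈ C) ∧
      -- and each is ≤ ⌈x−y⌉
      (qsup (-(x - y)) (x - y) - (x - qsup (-y) y) ∈ C ∧
       qsup (-(x - y)) (x - y) - (-x - qsup (-y) y) ∈ C ∧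
       qsup (-(x - y)) (x - y) - (y - qsup (-x) x) ∈ C ∧
       qsup (-(x - y)) (x - y) - (-y - qsup (-x) x) ∈ C) := by
  -- The quasi-absolute value is an upper bound: `-z ≤ ⌈z⌉` and `z ≤ ⌈z⌉`.
  have lower : ∀ z : X, qsup (-z) z - -z ∈ C := fun z => (hqsup (-z) z).1.1.1
  have upper : ∀ z : X, qsup (-z) z - z ∈ C := fun z => (hqsup (-z) z).1.1.2
  intro x y
  -- Each difference below is a sum of two such cone elements.
  refine ⟨⟨?_, ?_⟩, ⟨?_, ?_, ?_, ?_⟩, ⟨?_, ?_, ?_, ?_⟩⟩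
  · convert hC_add _ (upper x) _ (upper y) using 1; abel
  · convert hC_add _ (lower x) _ (lower y) using 1; abel
  · convert hC_add _ (upper (x + y)) _ (lower y) using 1; abel
  · convert hC_add _ (lower (x + y)) _ (upper y) using 1; abel
  · convert hC_add _ (upper (x + y)) _ (lower x) using 1; abel
  · convert hC_add _ (lower (x + y)) _ (upper x) using 1; abel
  · convert hC_add _ (upper (x - y)) _ (upper y) using 1; abel
  · convert hC_add _ (lower (x - y)) _ (lower y) using 1; abel
  · convert hC_add _ (lower (x - y)) _ (upper x) using 1; abel
  · convert hC_add _ (upper (x - y)) _ (lower x) using 1; abel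
end

section
/- Every monotone υ-quasi-lattice is a μ-quasi-lattice, and its υ- and μ-quasi-lattice structures coincide: if X is a monotone υ-quasi-lattice, then for every x, y ∈ X the υ-quasi-supremum x∨̃y is a minimal upper bound of {x,y}, and it is the unique element of μ({x,y}) minimizing σ_{x,y} on μ({x,y}). -/
/-- Every monotone `υ`-quasi-lattice is a `μ`-quasi-lattice with coinciding
structures: the `υ`-quasi-supremum `qsup x y` is a minimal upper bound of `{x,y}`, and it
is the unique minimal upper bound minimizing `σ_{x,y}` over all minimal upper bounds. -/
theorem stmt_14
    {X : Type*} [NormedAddCommGroup X] [NormedSpace ℝ X] [CompleteSpace X]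
    (C : Set X) (hC_closed : IsClosed C)
    (hC_add : ∀ a ∈ C, ∀ b ∈ C, a + b ∈ C)
    (hC_smul : ∀ r : ℝ, 0 ≤ r → ∀ a ∈ C, r • a ∈ C)
    (hmono : ∀ x y : X, x ∈ C → y - x ∈ C → ‖x‖ ≤ ‖y‖)
    (qsup : X → X → X)
    (hqsup : ∀ x y : X,
      ((qsup x y - x ∈ C ∧ qsup x y - y ∈ C) ∧
        ∀ w : X, (w - x ∈ C ∧ w - y ∈ C) →
          ‖qsup x y - x‖ + ‖qsup x y - y‖ ≤ ‖w - x‖ + ‖w - y‖) ∧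
      ∀ z : X, ((z - x ∈ C ∧ z - y ∈ C) ∧
          ∀ w : X, (w - x ∈ C ∧ w - y ∈ C) →
            ‖z - x‖ + ‖z - y‖ ≤ ‖w - x‖ + ‖w - y‖) → z = qsup x y) :
    ∀ x y : X,
      -- qsup x y is a minimal upper bound of {x,y}
      ((qsup x y - x ∈ C ∧ qsup x y - y ∈ C) ∧
        ∀ w : X, (w - x ∈ C ∧ w - y ∈ C) → qsup x y - w ∈ C → w = qsup x y) ∧
      -- it minimizes σ_{x,y} on the minimal upper bounds
      (∀ w : X, ((w - x ∈ C ∧ w - y ∈ C) ∧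
          ∀ u : X, (u - x ∈ C ∧ u - y ∈ C) → w - u ∈ C → u = w) →
        ‖qsup x y - x‖ + ‖qsup x y - y‖ ≤ ‖w - x‖ + ‖w - y‖) ∧
      -- and it is the unique such minimizer
      (∀ z : X, (((z - x ∈ C ∧ z - y ∈ C) ∧
            ∀ u : X, (u - x ∈ C ∧ u - y ∈ C) → z - u ∈ C → u = z) ∧
          ∀ w : X, ((w - x ∈ C ∧ w - y ∈ C) ∧
              ∀ u : X, (u - x ∈ C ∧ u - y ∈ C) → w - u ∈ C → u = w) →
            ‖z - x‖ + ‖z - y‖ ≤ ‖w - x‖ + ‖w - y‖) →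
        z = qsup x y) := by
  intro x y
  obtain ⟨⟨hub, hmin⟩, huniq⟩ := hqsup x y
  -- By monotonicity an upper bound below `qsup x y` also minimizes `σ_{x,y}`,
  -- so it equals `qsup x y`.
  have hminimal : ∀ w : X, (w - x ∈ C ∧ w - y ∈ C) → qsup x y - w ∈ C → w = qsup x y := by
    intro w hw hle
    refine huniq w ⟨hw, fun v hv => le_trans (add_le_add ?_ ?_) (hmin v hv)⟩
    · exact hmono _ _ hw.1 (by simpa using hle)
    · exact hmono _ _ hw.2 (by simpa using hle)
  refine ⟨⟨hub, hminimal⟩, fun w hw => hmin w hw.1, ?_⟩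
  -- A minimizer over the minimal upper bounds does at least as well as `qsup x y`,
  -- hence minimizes over all upper bounds.
  rintro z ⟨⟨hz, -⟩, hzmin⟩
  exact huniq z ⟨hz, fun v hv => (hzmin _ ⟨hub, hminimal⟩).trans (hmin v hv)⟩
end

section
/- Every strictly convex reflexive ordered Banach space X with a closed proper generating cone is an υ-quasi-lattice: for every x, y ∈ X the set of upper bounds υ({x,y}) is nonempty and contains a unique element minimizing σ_{x,y}(z) = ‖z − x‖ + ‖z − y‖ on υ({x,y}). -/
/-!
Existence: a nonempty closed convex set in a reflexive space carries a minimizer of every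
continuous convex function whose sublevel sets there are bounded, because such sublevel sets are
weakly compact (`isCompact_weak_of_reflexive`, from Banach–Alaoglu in the bidual) and the function
is weakly lower semicontinuous. It applies to `σ w = ‖w - x‖ + ‖w - y‖` on the upper bounds of
`{x, y}`, which exist because the cone is generating.

Uniqueness: if `z₁` and `z₂` are minimizers, so is their midpoint, which forces equality in the
triangle inequalities for `(z₁ - x) + (z₂ - x)` and `(z₁ - y) + (z₂ - y)`. By strict convexity the
two vectors of each pair lie on a common ray of the cone, so the longer minus the shorter is
positive (`sub_mem_of_norm_add_eq`). As `σ z₁ = σ z₂`, the longer vector belongs to `z₁` in one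
pair and to `z₂` in the other, hence `z₁ - z₂` and `z₂ - z₁` both lie in the cone, and `z₁ = z₂`
because the cone is proper.
-/

/-- Mazur's theorem for closed convex sets. -/
lemma isClosed_weak_of_convex {X : Type*} [NormedAddCommGroup X] [NormedSpace ℝ X]
    {s : Set X} (hs : Convex ℝ s) (hc : IsClosed s) :
    IsClosed (toWeakSpace ℝ X '' s) := by
  have h := hs.toWeakSpace_closure (𝕜 := ℝ)
  rw [hc.closure_eq] at h
  rw [h]
  exact isClosed_closure

lemma isCompact_weak_of_reflexive {X : Type*} [NormedAddCommGroup X] [NormedSpace ℝ X]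
    (hrefl : Function.Surjective (NormedSpace.inclusionInDoubleDual ℝ X))
    {s : Set X} (hs : Convex ℝ s) (hc : IsClosed s) (hb : Bornology.IsBounded s) :
    IsCompact (toWeakSpace ℝ X '' s) := by
  rw [← (isClosed_weak_of_convex hs hc).closure_eq]
  refine NormedSpace.isCompact_closure_of_isBounded ℝ X _ ?_ ?_
  · rwa [Set.preimage_image_eq _ (toWeakSpace ℝ X).injective]
  · intro φ _
    obtain ⟨x, hx⟩ := hrefl (WeakDual.toStrongDual φ)
    exact ⟨toWeakSpace ℝ X x, by
      simp [NormedSpace.inclusionInDoubleDualWeak_apply, hx]⟩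

lemma exists_min_of_reflexive {X : Type*} [NormedAddCommGroup X] [NormedSpace ℝ X]
    (hrefl : Function.Surjective (NormedSpace.inclusionInDoubleDual ℝ X))
    {s : Set X} (hs : Convex ℝ s) (hc : IsClosed s) (hne : s.Nonempty)
    {f : X → ℝ} (hf : ConvexOn ℝ Set.univ f) (hfc : Continuous f)
    (hb : ∀ r, Bornology.IsBounded (s ∩ {w | f w ≤ r})) :
    ∃ z ∈ s, ∀ w ∈ s, f z ≤ f w := by
  have hconv : ∀ r, Convex ℝ {w | f w ≤ r} := fun r => by simpa using hf.convex_le r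
  have hclosed : ∀ r, IsClosed {w | f w ≤ r} := fun r => isClosed_le hfc continuous_const
  obtain ⟨w₀, hw₀⟩ := hne
  have hcomp := isCompact_weak_of_reflexive hrefl (hs.inter (hconv (f w₀)))
    (hc.inter (hclosed (f w₀))) (hb (f w₀))
  have hlsc : LowerSemicontinuous (fun w : WeakSpace ℝ X => f ((toWeakSpace ℝ X).symm w)) := by
    rw [lowerSemicontinuous_iff_isClosed_preimage]
    intro r
    convert isClosed_weak_of_convex (hconv r) (hclosed r) using 1
    ext w
    constructor
    · intro hw
      exact ⟨(toWeakSpace ℝ X).symm w, hw, by simp⟩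
    · rintro ⟨v, hv, rfl⟩
      simpa using hv
  have hne : (s ∩ {w | f w ≤ f w₀}).Nonempty := ⟨w₀, hw₀, le_refl (f w₀)⟩
  obtain ⟨a, ⟨z, hz, rfl⟩, hmin⟩ := LowerSemicontinuousOn.exists_isMinOn
    (hne.image _) hcomp (hlsc.lowerSemicontinuousOn _)
  refine ⟨z, hz.1, fun w hw => ?_⟩
  by_cases h : f w ≤ f w₀
  · simpa using hmin ⟨w, ⟨hw, h⟩, rfl⟩
  · exact hz.2.trans (not_le.mp h).le

/-- Two vectors of a cone with equality in the triangle inequality lie on a common ray, so they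
are ordered as their norms are. -/
lemma sub_mem_of_norm_add_eq {X : Type*} [NormedAddCommGroup X] [NormedSpace ℝ X]
    (hsc : ∀ x y : X, ‖x + y‖ = ‖x‖ + ‖y‖ →
      (∃ r : ℝ, 0 ≤ r ∧ y = r • x) ∨ (∃ r : ℝ, 0 ≤ r ∧ x = r • y))
    {C : Set X} (hC_smul : ∀ r : ℝ, 0 ≤ r → ∀ a ∈ C, r • a ∈ C)
    {u v : X} (hu : u ∈ C) (hv : v ∈ C) (h : ‖u + v‖ = ‖u‖ + ‖v‖) (hle : ‖u‖ ≤ ‖v‖) :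
    v - u ∈ C := by
  rcases hsc u v h with ⟨r, hr, rfl⟩ | ⟨r, hr, rfl⟩
  · rcases eq_or_ne u 0 with rfl | hne
    · simpa using hu
    · have hpos := norm_pos_iff.mpr hne
      rw [norm_smul, Real.norm_of_nonneg hr] at hle
      have h1 : 1 ≤ r := by nlinarith
      simpa [sub_smul] using hC_smul (r - 1) (by linarith) u hu
  · rcases eq_or_ne v 0 with rfl | hne
    · simpa using hv
    · have hpos := norm_pos_iff.mpr hne
      rw [norm_smul, Real.norm_of_nonneg hr] at hle
      have h1 : r ≤ 1 := by nlinarith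
      simpa [sub_smul] using hC_smul (1 - r) (by linarith) v hv

/-- Every strictly convex reflexive ordered Banach space with a closed
proper generating cone is an `υ`-quasi-lattice. Reflexivity is expressed as surjectivity
of the canonical inclusion into the double dual, and strict convexity as: whenever
`‖x + y‖ = ‖x‖ + ‖y‖`, one of `x`, `y` is a nonnegative multiple of the other. -/
theorem stmt_15
    {X : Type*} [NormedAddCommGroup X] [NormedSpace ℝ X] [CompleteSpace X]
    (hrefl : Function.Surjective (NormedSpace.inclusionInDoubleDual ℝ X))
    (hsc : ∀ x y : X, ‖x + y‖ = ‖x‖ + ‖y‖ →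
      (∃ r : ℝ, 0 ≤ r ∧ y = r • x) ∨ (∃ r : ℝ, 0 ≤ r ∧ x = r • y))
    (C : Set X) (hC_closed : IsClosed C)
    (hC_add : ∀ a ∈ C, ∀ b ∈ C, a + b ∈ C)
    (hC_smul : ∀ r : ℝ, 0 ≤ r → ∀ a ∈ C, r • a ∈ C)
    (hC_proper : C ∩ (-C) = {0})
    (hC_gen : ∀ x : X, ∃ a ∈ C, ∃ b ∈ C, x = a - b) :
    ∀ x y : X, ∃! z : X,
      (z - x ∈ C ∧ z - y ∈ C) ∧
      ∀ w : X, (w - x ∈ C ∧ w - y ∈ C) →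
        ‖z - x‖ + ‖z - y‖ ≤ ‖w - x‖ + ‖w - y‖ := by
  intro x y
  have hhalf : ∀ a b p : X, midpoint ℝ a b - p = (1 / 2 : ℝ) • ((a - p) + (b - p)) := by
    intro a b p
    rw [midpoint_eq_smul_add, invOf_eq_inv]
    module
  refine existsUnique_of_exists_of_unique ?_ ?_
  · have hCconv : Convex ℝ C := fun a ha b hb s t hs ht _ =>
      hC_add _ (hC_smul s hs a ha) _ (hC_smul t ht b hb)
    have hsub : ∀ p : X, Continuous fun w : X => w - p := fun p => by fun_prop
    have hCp : ∀ p : X, Convex ℝ {w | w - p ∈ C} := fun p => by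
      simpa [Set.preimage, sub_eq_add_neg] using hCconv.translate_preimage_left (-p)
    have hnorm : ∀ p : X, ConvexOn ℝ Set.univ fun w : X => ‖w - p‖ := fun p => by
      simpa [dist_eq_norm] using convexOn_univ_dist (E := X) p
    obtain ⟨z, hz, hmin⟩ := exists_min_of_reflexive hrefl
      (s := {w | w - x ∈ C} ∩ {w | w - y ∈ C})
      ((hCp x).inter (hCp y))
      ((hC_closed.preimage (hsub x)).inter (hC_closed.preimage (hsub y)))
      (by
        obtain ⟨a, ha, b, hb, rfl⟩ := hC_gen x
        obtain ⟨c, hc, d, hd, rfl⟩ := hC_gen y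
        refine ⟨a + c, ?_, ?_⟩
        · have := hC_add _ hc _ hb
          simpa [show a + c - (a - b) = c + b by abel] using this
        · have := hC_add _ ha _ hd
          simpa [show a + c - (c - d) = a + d by abel] using this)
      (f := fun w => ‖w - x‖ + ‖w - y‖)
      ((hnorm x).add (hnorm y)) (by fun_prop)
      (fun r => (Metric.isBounded_closedBall (x := x) (r := r)).subset fun w hw => by
        have h1 : ‖w - x‖ + ‖w - y‖ ≤ r := hw.2
        rw [Metric.mem_closedBall, dist_eq_norm]
        linarith [norm_nonneg (w - y)])
    exact ⟨z, hz, hmin⟩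
  · rintro z₁ z₂ ⟨⟨h1x, h1y⟩, hm1⟩ ⟨⟨h2x, h2y⟩, hm2⟩
    have hσ := le_antisymm (hm1 z₂ ⟨h2x, h2y⟩) (hm2 z₁ ⟨h1x, h1y⟩)
    have hmid := hm1 (midpoint ℝ z₁ z₂) (by
      rw [hhalf, hhalf]
      exact ⟨hC_smul _ (by norm_num) _ (hC_add _ h1x _ h2x),
        hC_smul _ (by norm_num) _ (hC_add _ h1y _ h2y)⟩)
    rw [hhalf, hhalf, norm_smul, norm_smul, Real.norm_of_nonneg (by norm_num)] at hmid
    have htx := norm_add_le (z₁ - x) (z₂ - x)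
    have hty := norm_add_le (z₁ - y) (z₂ - y)
    have hex : ‖(z₁ - x) + (z₂ - x)‖ = ‖z₁ - x‖ + ‖z₂ - x‖ := by linarith
    have hey : ‖(z₁ - y) + (z₂ - y)‖ = ‖z₁ - y‖ + ‖z₂ - y‖ := by linarith
    have hex' : ‖(z₂ - x) + (z₁ - x)‖ = ‖z₂ - x‖ + ‖z₁ - x‖ := by
      rw [add_comm, hex, add_comm]
    have hey' : ‖(z₂ - y) + (z₁ - y)‖ = ‖z₂ - y‖ + ‖z₁ - y‖ := by
      rw [add_comm, hey, add_comm]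
    have key : z₁ - z₂ ∈ C ∩ (-C) := by
      rw [Set.mem_inter_iff, Set.mem_neg, neg_sub]
      rcases le_total ‖z₁ - x‖ ‖z₂ - x‖ with hle | hle
      · have p := sub_mem_of_norm_add_eq hsc hC_smul h1x h2x hex hle
        have q := sub_mem_of_norm_add_eq hsc hC_smul h2y h1y hey' (by linarith)
        rw [sub_sub_sub_cancel_right] at p q
        exact ⟨q, p⟩
      · have p := sub_mem_of_norm_add_eq hsc hC_smul h2x h1x hex' hle
        have q := sub_mem_of_norm_add_eq hsc hC_smul h1y h2y hey (by linarith)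
        rw [sub_sub_sub_cancel_right] at p q
        exact ⟨p, q⟩
    rw [hC_proper, Set.mem_singleton_iff] at key
    exact sub_eq_zero.mp key
end

section
/- Let α > 0 and let X be an α-normal, smooth, reflexive pre-ordered Banach space with a closed cone such that X₊ − X₊ is dense in X. Then the dual X' (ordered by the dual cone) is an υ-quasi-lattice. If, in addition, X is approximately 1-conormal, then X' is a μ-quasi-lattice, and its υ- and μ-quasi-lattice structures coincide. -/
/-!
The dual cone is weak-* closed. It is generating because `C` is normal
(`exists_nonneg_ge`, a Hahn–Banach argument) and proper because `C - C` is dense (`eq_of_antisymm`).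
Hence the upper bounds of `f, g` form a nonempty weak-* closed set, on which the weak-* lower
semicontinuous coercive function `σ h = ‖h - f‖ + ‖h - g‖` attains its minimum by Banach–Alaoglu
(`exists_minimizer`).

By smoothness and reflexivity the dual norm is strictly convex (`strictConvex_dual`). If `h₁, h₂`
are two minimizers, then so is their midpoint, so `h₁ - f, h₂ - f` lie on a common ray, as do
`h₁ - g, h₂ - g`. If, say, `‖h₂ - f‖ ≤ ‖h₁ - f‖`, then `‖h₁ - g‖ ≤ ‖h₂ - g‖` since the sums agree;
as all four vectors are positive, the first ray gives `h₁ - h₂ ≥ 0` and the second gives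
`h₂ - h₁ ≥ 0`, so `h₁ = h₂` (`minimizer_unique`).

If `X` is approximately `1`-conormal, the dual norm is monotone on the dual cone
(`norm_le_of_dual_le`), so any upper bound below the minimizer is again a minimizer and hence
equal to it: the minimizer is a minimal upper bound, and the two structures coincide.
-/

open Set Filter Topology

section Helpers

variable {X : Type*} [NormedAddCommGroup X] [NormedSpace ℝ X]

/-- `h` is an upper bound of `f` and `g` for the order given by the dual cone of `C`. -/
def IsUB (C : Set X) (f g h : X →L[ℝ] ℝ) : Prop :=
  (∀ x ∈ C, 0 ≤ (h - f) x) ∧ (∀ x ∈ C, 0 ≤ (h - g) x)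

/-- The dual of a smooth reflexive space is strictly convex: if `‖φ + ψ‖ = 2` for unit vectors
`φ, ψ`, then by reflexivity `φ + ψ` attains its norm at a unit vector `x`, and both `φ` and `ψ`
support the unit ball at `x`. -/
theorem strictConvex_dual
    (hsmooth : ∀ x : X, ‖x‖ = 1 → ∃! φ : X →L[ℝ] ℝ, ‖φ‖ = 1 ∧ φ x = 1)
    (hrefl : Function.Surjective (NormedSpace.inclusionInDoubleDual ℝ X)) :
    StrictConvexSpace ℝ (X →L[ℝ] ℝ) := by
  refine StrictConvexSpace.of_norm_add_ne_two fun φ ψ hφ hψ hne h2 => hne ?_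
  have h0 : φ + ψ ≠ 0 := by
    intro h
    rw [h, norm_zero] at h2
    norm_num at h2
  obtain ⟨Φ, hΦ, hΦ'⟩ := exists_dual_vector ℝ (φ + ψ) (norm_ne_zero_iff.2 h0)
  obtain ⟨x, rfl⟩ := hrefl Φ
  have hx : ‖x‖ = 1 := by
    rw [← hΦ]
    exact ((NormedSpace.inclusionInDoubleDualLi ℝ (E := X)).norm_map x).symm
  have hsum : φ x + ψ x = 2 := by
    have : φ x + ψ x = ‖φ + ψ‖ := by simpa using hΦ'
    rw [this, h2]
  have h1 : φ x ≤ 1 := by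
    have := (le_abs_self _).trans (φ.le_opNorm x)
    rwa [hφ, hx, one_mul] at this
  have h1' : ψ x ≤ 1 := by
    have := (le_abs_self _).trans (ψ.le_opNorm x)
    rwa [hψ, hx, one_mul] at this
  exact (hsmooth x hx).unique ⟨hφ, by linarith⟩ ⟨hψ, by linarith⟩

/-- The dual cone of a cone `C` with `C - C` dense is proper. -/
theorem eq_of_antisymm {C : Set X} (hdense : Dense {z : X | ∃ a ∈ C, ∃ b ∈ C, z = a - b})
    {h k : X →L[ℝ] ℝ} (h1 : ∀ x ∈ C, 0 ≤ (h - k) x) (h2 : ∀ x ∈ C, 0 ≤ (k - h) x) : h = k := by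
  have key : ∀ x ∈ C, h x = k x := fun x hx => by
    have a := h1 x hx
    have b := h2 x hx
    simp only [sub_apply] at a b
    linarith
  have := Continuous.ext_on hdense h.continuous k.continuous (by
    rintro z ⟨a, ha, b, hb, rfl⟩
    simp [key a ha, key b hb])
  exact DFunLike.coe_injective this

/-- The dual cone of a normal cone is generating: every functional `f` has an upper bound `p ≥ 0`.
M. Riesz extension is applied in `X × ℝ` to the functional `(0, t) ↦ t` and the cone of all `(x, t)`
with `M ‖x - y - z‖ ≤ t + f y` for some `y, z ∈ C`, where `M = α ‖f‖`. Normality makes the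
functional positive on the part of this cone in `{0} × ℝ`, and `p` is the restriction of the
extension to `X × {0}`. -/
theorem exists_nonneg_ge {α : ℝ} {C : Set X} (h0C : (0 : X) ∈ C)
    (hC_add : ∀ a ∈ C, ∀ b ∈ C, a + b ∈ C)
    (hC_smul : ∀ r : ℝ, 0 ≤ r → ∀ a ∈ C, r • a ∈ C)
    (hα : 0 < α) (hnormal : ∀ x y : X, x ∈ C → y - x ∈ C → ‖x‖ ≤ α * ‖y‖) (f : X →L[ℝ] ℝ) :
    ∃ p : X →L[ℝ] ℝ, (∀ x ∈ C, f x ≤ p x) ∧ (∀ x ∈ C, 0 ≤ p x) := by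
  set M : ℝ := α * ‖f‖ with hM
  have hM0 : 0 ≤ M := by positivity
  let s : PointedCone ℝ (X × ℝ) :=
    { carrier := {w | ∃ y ∈ C, ∃ z ∈ C, M * ‖w.1 - y - z‖ ≤ w.2 + f y}
      zero_mem' := ⟨0, h0C, 0, h0C, by simp⟩
      smul_mem' := by
        rintro ⟨c, hc⟩ ⟨x, t⟩ ⟨y, hy, z, hz, h⟩
        refine ⟨c • y, hC_smul c hc y hy, c • z, hC_smul c hc z hz, ?_⟩
        have e : c • x - c • y - c • z = c • (x - y - z) := by simp only [smul_sub]
        change M * ‖c • x - c • y - c • z‖ ≤ c * t + f (c • y)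
        rw [e, norm_smul, Real.norm_of_nonneg hc, map_smul, smul_eq_mul]
        have := mul_le_mul_of_nonneg_left h hc
        simp only at this
        linarith
      add_mem' := by
        rintro ⟨x, t⟩ ⟨x', t'⟩ ⟨y, hy, z, hz, h⟩ ⟨y', hy', z', hz', h'⟩
        refine ⟨y + y', hC_add y hy y' hy', z + z', hC_add z hz z' hz', ?_⟩
        have e : x + x' - (y + y') - (z + z') = (x - y - z) + (x' - y' - z') := by abel
        simp only [Prod.mk_add_mk, e, map_add]
        have := mul_le_mul_of_nonneg_left (norm_add_le (x - y - z) (x' - y' - z')) hM0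
        simp only at h h'
        linarith }
  let F : (X × ℝ) →ₗ.[ℝ] ℝ :=
    { domain := LinearMap.range (LinearMap.inr ℝ X ℝ)
      toFun := (LinearMap.snd ℝ X ℝ).comp (Submodule.subtype _) }
  obtain ⟨G, hG1, hG2⟩ := riesz_extension s F (by
      rintro ⟨_, t, rfl⟩ ⟨y, hy, z, hz, h⟩
      change 0 ≤ t
      simp only [LinearMap.inr_apply] at h
      have e : (0 : X) - y - z = -(y + z) := by abel
      rw [e, norm_neg] at h
      have h3 := hnormal y (y + z) hy (by simpa using hz)
      have h4 := (le_abs_self _).trans (f.le_opNorm y)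
      have h5 := mul_le_mul_of_nonneg_left h3 (norm_nonneg f)
      have h6 : M * ‖y + z‖ = ‖f‖ * (α * ‖y + z‖) := by rw [hM]; ring
      linarith) (by
      rintro ⟨x, t⟩
      refine ⟨⟨(0, M * ‖x‖ - t), ⟨M * ‖x‖ - t, rfl⟩⟩, 0, h0C, 0, h0C, ?_⟩
      simp)
  have hGt : ∀ t : ℝ, G (0, t) = t := fun t => hG1 ⟨(0, t), ⟨t, rfl⟩⟩
  have hGsplit : ∀ (x : X) (t : ℝ), G (x, t) = G (x, 0) + t := fun x t => by
    have : ((x, t) : X × ℝ) = (x, 0) + (0, t) := by simp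
    rw [this, map_add, hGt]
  let p₀ : X →ₗ[ℝ] ℝ := G.comp (LinearMap.inl ℝ X ℝ)
  have hp₀ : ∀ x, p₀ x = G (x, 0) := fun x => rfl
  have hlow : ∀ x, -(M * ‖x‖) ≤ p₀ x := fun x => by
    have := hG2 (x, M * ‖x‖) ⟨0, h0C, 0, h0C, by simp⟩
    rw [hGsplit, ← hp₀] at this
    linarith
  let p : X →L[ℝ] ℝ := p₀.mkContinuous M fun x => by
    have h1 := hlow x
    have h2 := hlow (-x)
    rw [map_neg, norm_neg] at h2
    exact abs_le.2 ⟨h1, by linarith⟩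
  have hp : ∀ x, p x = G (x, 0) := fun x => rfl
  refine ⟨p, fun x hx => ?_, fun x hx => ?_⟩
  · have := hG2 (x, -f x) ⟨x, hx, 0, h0C, by simp⟩
    rw [hGsplit, ← hp] at this
    linarith
  · have := hG2 (x, 0) ⟨0, h0C, x, hx, by simp⟩
    rwa [← hp] at this

/-- Banach–Alaoglu: `σ` attains its minimum on the upper bounds of `f, g` once there is one. -/
theorem exists_minimizer {C : Set X} {f g h₀ : X →L[ℝ] ℝ} (h₀UB : IsUB C f g h₀) :
    ∃ h, IsUB C f g h ∧ ∀ k, IsUB C f g k → ‖h - f‖ + ‖h - g‖ ≤ ‖k - f‖ + ‖k - g‖ := by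
  let T := WeakDual.toStrongDual (𝕜 := ℝ) (E := X)
  set r : ℝ := ‖h₀ - f‖ + ‖h₀ - g‖ with hr
  -- Every `h` with `σ h ≤ σ h₀` lies in this ball.
  let B : Set (WeakDual ℝ X) := T ⁻¹' Metric.closedBall f r
  have hB : IsCompact B := WeakDual.isCompact_closedBall f r
  let U : Set (WeakDual ℝ X) := {w | IsUB C f g (T w)}
  have hev : ∀ (u : X →L[ℝ] ℝ), IsClosed {w : WeakDual ℝ X | ∀ x ∈ C, 0 ≤ (T w - u) x} := by
    intro u
    simp only [ofPred_forall]
    refine isClosed_iInter fun x => isClosed_iInter fun _ => ?_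
    exact isClosed_le continuous_const ((WeakDual.eval_continuous x).sub continuous_const)
  have hU : IsClosed U := (hev f).inter (hev g)
  have hlsc : ∀ u : X →L[ℝ] ℝ, LowerSemicontinuous fun w : WeakDual ℝ X => ‖T w - u‖ := by
    intro u
    rw [lowerSemicontinuous_iff_isClosed_preimage]
    intro y
    have := WeakDual.isClosed_closedBall (𝕜 := ℝ) (E := X) u y
    convert this using 1
    ext w
    simp [T, dist_eq_norm]
  have hσ := (hlsc f).add (hlsc g)
  have h₀mem : T.symm h₀ ∈ B ∩ U := by
    refine ⟨?_, ?_⟩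
    · change T (T.symm h₀) ∈ Metric.closedBall f r
      rw [LinearEquiv.apply_symm_apply, Metric.mem_closedBall, dist_eq_norm]
      linarith [norm_nonneg (h₀ - g)]
    · change IsUB C f g (T (T.symm h₀))
      rwa [LinearEquiv.apply_symm_apply]
  obtain ⟨w, hw, hmin⟩ := LowerSemicontinuousOn.exists_isMinOn ⟨_, h₀mem⟩ (hB.inter_right hU)
    (hσ.lowerSemicontinuousOn _)
  refine ⟨T w, hw.2, fun k hk => ?_⟩
  have hw₀ : ‖T w - f‖ + ‖T w - g‖ ≤ r := by
    have := hmin h₀mem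
    simpa using this
  by_cases hkr : ‖k - f‖ ≤ r
  · have hkmem : T.symm k ∈ B ∩ U := by
      refine ⟨?_, ?_⟩
      · change T (T.symm k) ∈ Metric.closedBall f r
        rwa [LinearEquiv.apply_symm_apply, Metric.mem_closedBall, dist_eq_norm]
      · change IsUB C f g (T (T.symm k))
        rwa [LinearEquiv.apply_symm_apply]
    have := hmin hkmem
    simpa using this
  · linarith [norm_nonneg (k - g)]

/-- On a ray of the dual cone, the order is the order of the norms. -/
theorem dual_le_of_sameRay {C : Set X} {u v : X →L[ℝ] ℝ} (huv : SameRay ℝ u v)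
    (hu : ∀ x ∈ C, 0 ≤ u x) (hv : ∀ x ∈ C, 0 ≤ v x) (hn : ‖v‖ ≤ ‖u‖) :
    ∀ x ∈ C, 0 ≤ (u - v) x := by
  intro x hx
  obtain ⟨a, b, ha, hb, -, hua, hvb⟩ := huv.exists_eq_smul_add
  have hw : 0 ≤ (u + v) x := add_nonneg (hu x hx) (hv x hx)
  set w := u + v
  rw [hua, hvb, norm_smul, norm_smul, Real.norm_of_nonneg ha, Real.norm_of_nonneg hb] at hn
  have e : (u - v) x = (a - b) * w x := by
    rw [sub_apply, hua, hvb]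
    simp
    ring
  rw [e]
  rcases eq_or_ne w 0 with h | h
  · simp [h]
  · have : b ≤ a := le_of_mul_le_mul_right hn (norm_pos_iff.2 h)
    exact mul_nonneg (sub_nonneg.2 this) hw

theorem minimizer_unique {C : Set X} [StrictConvexSpace ℝ (X →L[ℝ] ℝ)]
    (hdense : Dense {z : X | ∃ a ∈ C, ∃ b ∈ C, z = a - b}) {f g h₁ h₂ : X →L[ℝ] ℝ}
    (hU₁ : IsUB C f g h₁) (hU₂ : IsUB C f g h₂)
    (hm₁ : ∀ k, IsUB C f g k → ‖h₁ - f‖ + ‖h₁ - g‖ ≤ ‖k - f‖ + ‖k - g‖)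
    (hm₂ : ∀ k, IsUB C f g k → ‖h₂ - f‖ + ‖h₂ - g‖ ≤ ‖k - f‖ + ‖k - g‖) : h₁ = h₂ := by
  have heq := le_antisymm (hm₁ h₂ hU₂) (hm₂ h₁ hU₁)
  have hmid : ∀ u : X →L[ℝ] ℝ,
      (2⁻¹ : ℝ) • (h₁ + h₂) - u = (2⁻¹ : ℝ) • ((h₁ - u) + (h₂ - u)) := fun u => by module
  have hmidpos : ∀ u : X →L[ℝ] ℝ, (∀ x ∈ C, 0 ≤ (h₁ - u) x) → (∀ x ∈ C, 0 ≤ (h₂ - u) x) →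
      ∀ x ∈ C, 0 ≤ ((2⁻¹ : ℝ) • (h₁ + h₂) - u) x := fun u a b x hx => by
    rw [hmid]
    exact mul_nonneg (by norm_num) (add_nonneg (a x hx) (b x hx))
  have hm := hm₁ _ ⟨hmidpos f hU₁.1 hU₂.1, hmidpos g hU₁.2 hU₂.2⟩
  rw [hmid, hmid, norm_smul, norm_smul, Real.norm_of_nonneg (by norm_num : (0 : ℝ) ≤ 2⁻¹)] at hm
  have t1 := norm_add_le (h₁ - f) (h₂ - f)
  have t2 := norm_add_le (h₁ - g) (h₂ - g)
  have rf : SameRay ℝ (h₁ - f) (h₂ - f) := sameRay_iff_norm_add.2 (by linarith)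
  have rg : SameRay ℝ (h₁ - g) (h₂ - g) := sameRay_iff_norm_add.2 (by linarith)
  rcases le_total ‖h₂ - f‖ ‖h₁ - f‖ with hle | hle
  · have a := dual_le_of_sameRay rf hU₁.1 hU₂.1 hle
    have b := dual_le_of_sameRay rg.symm hU₂.2 hU₁.2 (by linarith)
    rw [sub_sub_sub_cancel_right] at a b
    exact eq_of_antisymm hdense a b
  · have a := dual_le_of_sameRay rf.symm hU₂.1 hU₁.1 hle
    have b := dual_le_of_sameRay rg hU₁.2 hU₂.2 (by linarith)
    rw [sub_sub_sub_cancel_right] at a b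
    exact eq_of_antisymm hdense b a

/-- The dual of an approximately `1`-conormal space is `1`-normal. -/
theorem norm_le_of_dual_le {C : Set X}
    (hcon : ∀ x : X, ∀ ε : ℝ, 0 < ε → ∃ a, a ∈ C ∧ a - x ∈ C ∧ ‖a‖ < ‖x‖ + ε)
    {u v : X →L[ℝ] ℝ} (hu : ∀ x ∈ C, 0 ≤ u x) (huv : ∀ x ∈ C, u x ≤ v x) : ‖u‖ ≤ ‖v‖ := by
  have key : ∀ x, u x ≤ ‖v‖ * ‖x‖ := by
    intro x
    have hε : ∀ ε : ℝ, 0 < ε → u x ≤ ‖v‖ * (‖x‖ + ε) := by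
      intro ε hε
      obtain ⟨a, ha, hax, hn⟩ := hcon x ε hε
      have h1 := hu _ hax
      rw [map_sub] at h1
      have h2 := huv a ha
      have h3 := (le_abs_self _).trans (v.le_opNorm a)
      have h4 := mul_le_mul_of_nonneg_left hn.le (norm_nonneg v)
      linarith
    have hlim : Tendsto (fun ε : ℝ => ‖v‖ * (‖x‖ + ε)) (𝓝[>] 0) (𝓝 (‖v‖ * (‖x‖ + 0))) := by
      apply tendsto_nhdsWithin_of_tendsto_nhds
      exact Continuous.tendsto (by fun_prop) 0
    rw [add_zero] at hlim
    exact ge_of_tendsto hlim (eventually_nhdsWithin_of_forall hε)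
  refine u.opNorm_le_bound (norm_nonneg v) fun x => abs_le.2 ⟨?_, key x⟩
  have := key (-x)
  rw [map_neg, norm_neg] at this
  linarith

end Helpers

/-- If `X` is an `α`-normal, smooth, reflexive pre-ordered Banach space with
a closed cone `C` such that `C - C` is dense in `X`, then the dual `X'` (with the dual
cone) is an `υ`-quasi-lattice; if moreover `X` is approximately `1`-conormal, then `X'` is
a `μ`-quasi-lattice whose `υ`- and `μ`-quasi-lattice structures coincide. -/
theorem stmt_16
    {X : Type*} [NormedAddCommGroup X] [NormedSpace ℝ X] [CompleteSpace X]
    (α : ℝ) (hα : 0 < α)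
    (C : Set X) (hC_closed : IsClosed C)
    (hC_add : ∀ a ∈ C, ∀ b ∈ C, a + b ∈ C)
    (hC_smul : ∀ r : ℝ, 0 ≤ r → ∀ a ∈ C, r • a ∈ C)
    (hnormal : ∀ x y : X, x ∈ C → y - x ∈ C → ‖x‖ ≤ α * ‖y‖)
    (hsmooth : ∀ x : X, ‖x‖ = 1 → ∃! φ : X →L[ℝ] ℝ, ‖φ‖ = 1 ∧ φ x = 1)
    (hrefl : Function.Surjective (NormedSpace.inclusionInDoubleDual ℝ X))
    (hdense : Dense {z : X | ∃ a ∈ C, ∃ b ∈ C, z = a - b}) :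
    -- the dual cone
    (∀ f g : X →L[ℝ] ℝ, ∃! h : X →L[ℝ] ℝ,
      ((∀ x ∈ C, 0 ≤ (h - f) x) ∧ (∀ x ∈ C, 0 ≤ (h - g) x)) ∧
      ∀ k : X →L[ℝ] ℝ, ((∀ x ∈ C, 0 ≤ (k - f) x) ∧ (∀ x ∈ C, 0 ≤ (k - g) x)) →
        ‖h - f‖ + ‖h - g‖ ≤ ‖k - f‖ + ‖k - g‖)
    ∧ ((∀ x : X, ∀ ε : ℝ, 0 < ε → ∃ a, a ∈ C ∧ a - x ∈ C ∧ ‖a‖ < ‖x‖ + ε) →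
      ∀ f g : X →L[ℝ] ℝ,
        ∀ h : X →L[ℝ] ℝ,
          -- if h is the υ-quasi-supremum of {f,g} ...
          (((∀ x ∈ C, 0 ≤ (h - f) x) ∧ (∀ x ∈ C, 0 ≤ (h - g) x)) ∧
            ∀ k : X →L[ℝ] ℝ,
              ((∀ x ∈ C, 0 ≤ (k - f) x) ∧ (∀ x ∈ C, 0 ≤ (k - g) x)) →
                ‖h - f‖ + ‖h - g‖ ≤ ‖k - f‖ + ‖k - g‖) →
          -- ... then h is a minimal upper bound of {f,g} ...
          ((∀ k : X →L[ℝ] ℝ,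
              ((∀ x ∈ C, 0 ≤ (k - f) x) ∧ (∀ x ∈ C, 0 ≤ (k - g) x)) →
                (∀ x ∈ C, 0 ≤ (h - k) x) → k = h) ∧
           -- ... minimizing σ_{f,g} over all minimal upper bounds ...
           (∀ k : X →L[ℝ] ℝ,
              (((∀ x ∈ C, 0 ≤ (k - f) x) ∧ (∀ x ∈ C, 0 ≤ (k - g) x)) ∧
                ∀ l : X →L[ℝ] ℝ,
                  ((∀ x ∈ C, 0 ≤ (l - f) x) ∧ (∀ x ∈ C, 0 ≤ (l - g) x)) →
                    (∀ x ∈ C, 0 ≤ (k - l) x) → l = k) →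
              ‖h - f‖ + ‖h - g‖ ≤ ‖k - f‖ + ‖k - g‖) ∧
           -- ... and it is the unique such minimizer.
           (∀ h' : X →L[ℝ] ℝ,
              ((((∀ x ∈ C, 0 ≤ (h' - f) x) ∧ (∀ x ∈ C, 0 ≤ (h' - g) x)) ∧
                ∀ l : X →L[ℝ] ℝ,
                  ((∀ x ∈ C, 0 ≤ (l - f) x) ∧ (∀ x ∈ C, 0 ≤ (l - g) x)) →
                    (∀ x ∈ C, 0 ≤ (h' - l) x) → l = h') ∧
               ∀ k : X →L[ℝ] ℝ,
                 (((∀ x ∈ C, 0 ≤ (k - f) x) ∧ (∀ x ∈ C, 0 ≤ (k - g) x)) ∧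
                   ∀ l : X →L[ℝ] ℝ,
                     ((∀ x ∈ C, 0 ≤ (l - f) x) ∧ (∀ x ∈ C, 0 ≤ (l - g) x)) →
                       (∀ x ∈ C, 0 ≤ (k - l) x) → l = k) →
                 ‖h' - f‖ + ‖h' - g‖ ≤ ‖k - f‖ + ‖k - g‖) →
              h' = h))) := by
  have h0C : (0 : X) ∈ C := by
    obtain ⟨z, a, ha, -⟩ := hdense.nonempty
    simpa using hC_smul 0 le_rfl a ha
  have := strictConvex_dual hsmooth hrefl
  refine ⟨fun f g => ?_, fun hcon f g h hh => ?_⟩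
  · obtain ⟨p, hp1, hp2⟩ := exists_nonneg_ge h0C hC_add hC_smul hα hnormal (f - g)
    have hUB : IsUB C f g (g + p) := by
      refine ⟨fun x hx => ?_, fun x hx => ?_⟩
      · have := hp1 x hx
        simp only [sub_apply, add_apply] at this ⊢
        linarith
      · simpa using hp2 x hx
    obtain ⟨h, hU, hm⟩ := exists_minimizer hUB
    exact ⟨h, ⟨hU, hm⟩, fun k hk => minimizer_unique hdense hk.1 hU hk.2 hm⟩
  · obtain ⟨hU, hm⟩ := hh
    have hmono : ∀ (k u : X →L[ℝ] ℝ), (∀ x ∈ C, 0 ≤ (k - u) x) → (∀ x ∈ C, 0 ≤ (h - k) x) →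
        ‖k - u‖ ≤ ‖h - u‖ := fun k u hku hhk =>
      norm_le_of_dual_le hcon hku fun x hx => by
        have := hhk x hx
        simp only [sub_apply] at this ⊢
        linarith
    have hmin : ∀ k : X →L[ℝ] ℝ, IsUB C f g k → (∀ x ∈ C, 0 ≤ (h - k) x) → k = h :=
      fun k hk hhk => minimizer_unique hdense hk hU
        (fun l hl => (add_le_add (hmono k f hk.1 hhk) (hmono k g hk.2 hhk)).trans (hm l hl)) hm
    refine ⟨hmin, fun k hk => hm k hk.1, fun h' hh' => ?_⟩
    exact minimizer_unique hdense hh'.1.1 hU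
      (fun l hl => (hh'.2 h ⟨hU, hmin⟩).trans (hm l hl)) hm
end

section
/- Let H be a real Hilbert space with dim(H) ≥ 3, ordered by a Lorentz cone L_v for a norm-one element v ∈ H. Then H is not a Riesz space: there exist x, y ∈ H that have no supremum, i.e. no upper bound z of {x, y} such that z ≤ w for every upper bound w of {x, y}. In fact, for any orthonormal set {v, e₁, e₂} ⊆ H, the pair {0, 2e₁} has no supremum. -/
/-!
Let `z` be a supremum of `{0, 2e₁}`. Since `v + e₁` is an upper bound, `z ≤ v + e₁`. Writing
`z = p + t v` with `p ⊥ v`, this says `‖e₁ - p‖ ≤ 1 - t`, while `z` being an upper bound says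
`‖p‖ ≤ t` and `‖p - 2e₁‖ ≤ t`. The last two give `2 ≤ 2t`, so `t = 1` and `p = e₁`, that is
`z = e₁ + v`. The vector `e₁ + (3/4) e₂ + (5/4) v` is also an upper bound, because
`1 + (3/4)² = (5/4)²`, but it is not above `z`, because `3/4 > 5/4 - 1`.

For the existence claim, `v` is completed to an orthonormal triple: the span of at most two vectors
is proper when `dim H ≥ 3`, hence has a unit vector orthogonal to it.
-/

open scoped RealInnerProductSpace

/-- The Lorentz cone in a real Hilbert space determined by a norm-one vector `v`:
`{x | ⟨v, x⟩ ≥ ‖Px‖}`, where `Px = x - ⟨v, x⟩ v` is the orthogonal projection of `x`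
onto the orthogonal complement of `v` (for `‖v‖ = 1`). -/
def lorentzCone {H : Type*} [NormedAddCommGroup H] [InnerProductSpace ℝ H] (v : H) :
    Set H :=
  {x | ‖x - ⟪v, x⟫ • v‖ ≤ ⟪v, x⟫}

theorem add_smul_mem_lorentzCone_iff {H : Type*} [NormedAddCommGroup H] [InnerProductSpace ℝ H]
    {v p : H} (hv : ‖v‖ = 1) (hp : ⟪v, p⟫ = 0) (t : ℝ) :
    p + t • v ∈ lorentzCone v ↔ ‖p‖ ≤ t := by
  have h : ⟪v, p + t • v⟫ = t := by
    rw [inner_add_right, inner_smul_right, real_inner_self_eq_norm_sq, hv, hp]; ring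
  simp only [lorentzCone, Set.mem_ofPred_eq, h, add_sub_cancel_right]

theorem exists_unit_orthogonal_of_card_lt {H : Type*} [NormedAddCommGroup H]
    [InnerProductSpace ℝ H] (hdim : 3 ≤ Module.rank ℝ H) (s : Finset H) (hs : s.card < 3) :
    ∃ e : H, ‖e‖ = 1 ∧ ∀ x ∈ s, ⟪x, e⟫ = 0 := by
  have hne : Submodule.span ℝ (s : Set H) ≠ ⊤ := by
    intro h
    have h1 := rank_span_finset_le (R := ℝ) s
    rw [h, rank_top] at h1
    have h3 : 3 ≤ s.card := by exact_mod_cast hdim.trans h1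
    omega
  have hbot : (Submodule.span ℝ (s : Set H))ᗮ ≠ ⊥ := fun h =>
    hne (Submodule.orthogonal_eq_bot_iff.mp h)
  obtain ⟨u, hu, hu0⟩ := Submodule.exists_mem_ne_zero_of_ne_bot hbot
  refine ⟨‖u‖⁻¹ • u, norm_smul_inv_norm hu0, fun x hx => ?_⟩
  rw [inner_smul_right,
    (Submodule.mem_orthogonal _ _).mp hu x (Submodule.subset_span hx), mul_zero]

theorem no_sup_zero_two_smul {H : Type*} [NormedAddCommGroup H] [InnerProductSpace ℝ H]
    {v e₁ e₂ : H} (hv : ‖v‖ = 1) (h1 : ‖e₁‖ = 1) (h2 : ‖e₂‖ = 1)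
    (hv1 : ⟪v, e₁⟫ = 0) (hv2 : ⟪v, e₂⟫ = 0) (h12 : ⟪e₁, e₂⟫ = 0) :
    ¬ ∃ z : H,
      (z - 0 ∈ lorentzCone v ∧ z - (2 : ℝ) • e₁ ∈ lorentzCone v) ∧
      ∀ w : H, (w - 0 ∈ lorentzCone v ∧ w - (2 : ℝ) • e₁ ∈ lorentzCone v) →
        w - z ∈ lorentzCone v := by
  -- Membership test for a vector presented in the form `p + t v` up to rearrangement.
  have key : ∀ (x p : H) (t : ℝ), x = p + t • v → ⟪v, p⟫ = 0 →
      (x ∈ lorentzCone v ↔ ‖p‖ ≤ t) := by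
    rintro x p t rfl hp
    exact add_smul_mem_lorentzCone_iff hv hp t
  rintro ⟨z, ⟨hz0, hz1⟩, hz⟩
  obtain ⟨t, p, hp, rfl⟩ : ∃ (t : ℝ) (p : H), ⟪v, p⟫ = 0 ∧ z = p + t • v := by
    refine ⟨⟪v, z⟫, z - ⟪v, z⟫ • v, ?_, by simp⟩
    rw [inner_sub_right, inner_smul_right, real_inner_self_eq_norm_sq, hv]; ring
  rw [key _ p t (by simp) hp] at hz0
  rw [key _ (p - (2 : ℝ) • e₁) t (by module)
    (by simp [inner_sub_right, inner_smul_right, hp, hv1])] at hz1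
  have hw := hz (e₁ + (1 : ℝ) • v)
    ⟨(key _ e₁ 1 (by simp) hv1).mpr h1.le,
      (key _ (-e₁) 1 (by module) (by simp [hv1])).mpr (by simp [h1])⟩
  rw [key _ (e₁ - p) (1 - t) (by module) (by simp [inner_sub_right, hp, hv1])] at hw
  have htwo : ‖(2 : ℝ) • e₁‖ ≤ ‖p‖ + ‖p - (2 : ℝ) • e₁‖ := by
    simpa using norm_sub_le p (p - (2 : ℝ) • e₁)
  rw [norm_smul, h1] at htwo
  norm_num at htwo
  have ht : t = 1 := by linarith [norm_nonneg (e₁ - p)]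
  subst ht
  have hpe : e₁ = p := by
    rw [← sub_eq_zero, ← norm_le_zero_iff]; linarith
  subst hpe
  -- `(1, 3/4, 5/4)` is Pythagorean, so both `±e₁ + (3/4) e₂` have norm `5/4`.
  have hnorm : ∀ e : H, ‖e‖ = 1 → ⟪e, e₂⟫ = 0 → ‖e + (3 / 4 : ℝ) • e₂‖ ≤ 5 / 4 := by
    intro e he he2
    have hsq : ‖e + (3 / 4 : ℝ) • e₂‖ ^ 2 = (5 / 4) ^ 2 := by
      rw [norm_add_sq_real, inner_smul_right, norm_smul, he, he2, h2]; norm_num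
    exact (pow_le_pow_iff_left₀ (norm_nonneg _) (by norm_num) two_ne_zero).mp hsq.le
  have hw2 := hz (e₁ + (3 / 4 : ℝ) • e₂ + (5 / 4 : ℝ) • v)
    ⟨(key _ (e₁ + (3 / 4 : ℝ) • e₂) (5 / 4) (by simp)
        (by simp [inner_add_right, inner_smul_right, hv1, hv2])).mpr (hnorm e₁ h1 h12),
      (key _ (-e₁ + (3 / 4 : ℝ) • e₂) (5 / 4) (by module)
        (by simp [inner_add_right, inner_smul_right, hv1, hv2])).mpr
        (hnorm (-e₁) (by simp [h1]) (by simp [h12]))⟩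
  rw [key _ ((3 / 4 : ℝ) • e₂) (1 / 4) (by module)
    (by simp [inner_smul_right, hv2]), norm_smul, h2] at hw2
  norm_num at hw2

/-- A real Hilbert space of dimension at least 3, ordered by a Lorentz cone,
is not a Riesz space: some pair has no supremum; in fact for any orthonormal set
`{v, e₁, e₂}` the pair `{0, 2e₁}` has no supremum. Here `x ≤ y` means
`y - x ∈ lorentzCone v`. -/
theorem stmt_17
    {H : Type*} [NormedAddCommGroup H] [InnerProductSpace ℝ H] [CompleteSpace H]
    (hdim : 3 ≤ Module.rank ℝ H)
    (v : H) (hv : ‖v‖ = 1) :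
    (∃ x y : H, ¬ ∃ z : H,
      (z - x ∈ lorentzCone v ∧ z - y ∈ lorentzCone v) ∧
      ∀ w : H, (w - x ∈ lorentzCone v ∧ w - y ∈ lorentzCone v) →
        w - z ∈ lorentzCone v)
    ∧ ∀ e₁ e₂ : H, ‖e₁‖ = 1 → ‖e₂‖ = 1 →
        ⟪v, e₁⟫ = 0 → ⟪v, e₂⟫ = 0 → ⟪e₁, e₂⟫ = 0 →
        ¬ ∃ z : H,
          (z - 0 ∈ lorentzCone v ∧ z - (2 : ℝ) • e₁ ∈ lorentzCone v) ∧
          ∀ w : H, (w - 0 ∈ lorentzCone v ∧ w - (2 : ℝ) • e₁ ∈ lorentzCone v) →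
            w - z ∈ lorentzCone v := by
  refine ⟨?_, fun e₁ e₂ h1 h2 hv1 hv2 h12 => no_sup_zero_two_smul hv h1 h2 hv1 hv2 h12⟩
  classical
  obtain ⟨e₁, h1, ho1⟩ := exists_unit_orthogonal_of_card_lt hdim {v} (by simp)
  obtain ⟨e₂, h2, ho2⟩ := exists_unit_orthogonal_of_card_lt hdim {v, e₁}
    (lt_of_le_of_lt Finset.card_le_two (by norm_num))
  exact ⟨0, (2 : ℝ) • e₁, no_sup_zero_two_smul hv h1 h2 (ho1 v (by simp)) (ho2 v (by simp))
    (ho2 e₁ (by simp))⟩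
end

section
/- A real Hilbert space endowed with a Lorentz cone is absolutely monotone: if H is a real Hilbert space ordered by the Lorentz cone L_v for a norm-one element v ∈ H, then for all x, y ∈ H, x ≤ y and −x ≤ y together imply ‖x‖ ≤ ‖y‖. -/
/-!
The Lorentz cone is contained in its dual cone: any two of its elements have a nonnegative
inner product (`inner_nonneg_of_mem_lorentzCone`). Applied to `y - x` and `y + x`, this gives
`0 ≤ ⟪y - x, y + x⟫ = ‖y‖ ^ 2 - ‖x‖ ^ 2`.
-/

open scoped RealInnerProductSpace

/-- Splitting along `v` gives `⟪a, b⟫ = ⟪v, a⟫ * ⟪v, b⟫ + ⟪Pa, Pb⟫`, and by Cauchy–Schwarz the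
last term is at least `-(‖Pa‖ * ‖Pb‖) ≥ -(⟪v, a⟫ * ⟪v, b⟫)`. -/
theorem inner_nonneg_of_mem_lorentzCone {H : Type*} [NormedAddCommGroup H]
    [InnerProductSpace ℝ H] {v a b : H} (hv : ‖v‖ = 1)
    (ha : a ∈ lorentzCone v) (hb : b ∈ lorentzCone v) : 0 ≤ ⟪a, b⟫ := by
  simp only [lorentzCone, Set.mem_ofPred_eq] at ha hb
  have hsplit : ⟪a - ⟪v, a⟫ • v, b - ⟪v, b⟫ • v⟫ = ⟪a, b⟫ - ⟪v, a⟫ * ⟪v, b⟫ := by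
    simp only [inner_sub_left, inner_sub_right, real_inner_smul_left, real_inner_smul_right,
      real_inner_self_eq_norm_sq, hv, real_inner_comm v a]
    ring
  have hcs := neg_le_of_abs_le (abs_real_inner_le_norm (a - ⟪v, a⟫ • v) (b - ⟪v, b⟫ • v))
  have hmul := mul_le_mul ha hb (norm_nonneg _) ((norm_nonneg _).trans ha)
  linarith

/-- A real Hilbert space ordered by a Lorentz cone is absolutely monotone:
if `±x ≤ y` (that is, `y - x` and `y + x` lie in the cone), then `‖x‖ ≤ ‖y‖`. -/
theorem stmt_18
    {H : Type*} [NormedAddCommGroup H] [InnerProductSpace ℝ H] [CompleteSpace H]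
    (v : H) (hv : ‖v‖ = 1) :
    ∀ x y : H, y - x ∈ lorentzCone v → y + x ∈ lorentzCone v → ‖x‖ ≤ ‖y‖ := by
  intro x y hsub hadd
  have h := inner_nonneg_of_mem_lorentzCone hv hsub hadd
  rw [inner_sub_left, inner_add_right, inner_add_right, real_inner_self_eq_norm_sq,
    real_inner_self_eq_norm_sq, real_inner_comm y x] at h
  exact (sq_le_sq₀ (norm_nonneg x) (norm_nonneg y)).mp (by linarith)
end

section
/- Let H be a real Hilbert space ordered by the Lorentz cone L_v for a norm-one element v ∈ H. Then for every x ∈ H there exists a unique element z ∈ H with x ≤ z and −x ≤ z that minimizes σ(w) := ‖w − x‖ + ‖w + x‖ over all upper bounds w of {x, −x}, and this quasi-absolute value z = ⌈x⌉ satisfies ‖⌈x⌉‖ = ‖x‖. Consequently H is 1-absolutely conormal: for every x ∈ H there exists a ∈ L_v with ±x ≤ a and ‖a‖ ≤ ‖x‖. -/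
/-!
Write `x = α v + p` with `p ⊥ v`, so that `s v + y` (with `y ⊥ v`) lies in the cone iff `‖y‖ ≤ s`.

If `x` or `-x` lies in the cone, the minimizer is `z = ± x`. Say `x ≥ 0`. For an upper bound `w`,
self-duality of the cone gives `⟪w - x, x⟫ ≥ 0`, so `‖w + x‖ ≥ 2 ‖x‖ = σ(x)`, and
`σ(w) = σ(x)` forces `w = x`.

Otherwise `|α| < ‖p‖` and the minimizer is `z = ‖p‖ v + (α / ‖p‖) p`, whose norm is visibly `‖x‖`.
For an upper bound `w = t v + q`, both `w ± x` lie in the cone, whence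
`σ(w) ≥ √2 (‖q - p‖ + ‖q + p‖) ≥ 2 √2 ‖p‖ = σ(z)`. Equality forces `t - α = ‖q - p‖`,
`t + α = ‖q + p‖` and `t = ‖p‖`, and then `‖q‖² = α²`, `⟪q, p⟫ = α ‖p‖`, so `‖p‖ q = α p`.
-/


open scoped RealInnerProductSpace

section Lorentz

variable {H : Type*} [NormedAddCommGroup H] [InnerProductSpace ℝ H] {v : H}

lemma exists_lorentz_decomp (hv : ‖v‖ = 1) (x : H) :
    ∃ (s : ℝ) (y : H), ⟪v, y⟫ = 0 ∧ x = s • v + y := by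
  refine ⟨⟪v, x⟫, x - ⟪v, x⟫ • v, ?_, by abel⟩
  rw [inner_sub_right, inner_smul_right, real_inner_self_eq_norm_sq, hv]
  ring

lemma mem_lorentzCone_decomp (hv : ‖v‖ = 1) (s : ℝ) {y : H} (hy : ⟪v, y⟫ = 0) :
    s • v + y ∈ lorentzCone v ↔ ‖y‖ ≤ s := by
  have h : ⟪v, s • v + y⟫ = s := by
    rw [inner_add_right, inner_smul_right, real_inner_self_eq_norm_sq, hv, hy]
    ring
  simp [lorentzCone, h]

lemma norm_sq_decomp (hv : ‖v‖ = 1) (s : ℝ) {y : H} (hy : ⟪v, y⟫ = 0) :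
    ‖s • v + y‖ ^ 2 = s ^ 2 + ‖y‖ ^ 2 := by
  rw [norm_add_sq_real, inner_smul_left, hy, norm_smul, hv]
  simp

/-- The cone lies within angle `π/4` of `v`, so its elements have norm at least `√2` times that of
their component orthogonal to `v`, with equality only on the boundary. -/
lemma sqrt_two_mul_le_norm_decomp (hv : ‖v‖ = 1) {s : ℝ} {y : H} (hy : ⟪v, y⟫ = 0)
    (hs : ‖y‖ ≤ s) :
    √2 * ‖y‖ ≤ ‖s • v + y‖ ∧ (‖s • v + y‖ ≤ √2 * ‖y‖ → s = ‖y‖) := by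
  have h1 := norm_sq_decomp hv s hy
  have h2 : (√2 * ‖y‖) ^ 2 = 2 * ‖y‖ ^ 2 := by rw [mul_pow, Real.sq_sqrt (by norm_num)]
  have h0 := norm_nonneg y
  refine ⟨le_of_pow_le_pow_left₀ two_ne_zero (norm_nonneg _) (by nlinarith), fun h => ?_⟩
  have h3 := pow_le_pow_left₀ (norm_nonneg _) h 2
  exact le_antisymm (le_of_pow_le_pow_left₀ two_ne_zero h0 (by linarith)) hs

/-- Half of the self-duality of the Lorentz cone. -/
lemma inner_nonneg_of_mem_lorentzCone_s19 (hv : ‖v‖ = 1) {x y : H} (hx : x ∈ lorentzCone v)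
    (hy : y ∈ lorentzCone v) : 0 ≤ ⟪x, y⟫ := by
  obtain ⟨a, p, hp, rfl⟩ := exists_lorentz_decomp hv x
  obtain ⟨b, q, hq, rfl⟩ := exists_lorentz_decomp hv y
  rw [mem_lorentzCone_decomp hv _ hp] at hx
  rw [mem_lorentzCone_decomp hv _ hq] at hy
  have hp' : ⟪p, v⟫ = 0 := by rw [real_inner_comm, hp]
  have h : ⟪a • v + p, b • v + q⟫ = a * b + ⟪p, q⟫ := by
    simp only [inner_add_left, inner_add_right, real_inner_smul_left, real_inner_smul_right,
      real_inner_self_eq_norm_sq, hv, hp', hq]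
    ring
  have h1 := abs_le.1 (abs_real_inner_le_norm p q)
  have h2 : ‖p‖ * ‖q‖ ≤ a * b :=
    mul_le_mul hx hy (norm_nonneg _) ((norm_nonneg _).trans hx)
  linarith [h1.1]

/-- `z` is an upper bound of `{x, -x}` of norm `‖x‖` that strictly minimizes `‖w - x‖ + ‖w + x‖`
among all upper bounds `w`. -/
def IsQuasiAbs (v x z : H) : Prop :=
  z - x ∈ lorentzCone v ∧ z + x ∈ lorentzCone v ∧ ‖z‖ = ‖x‖ ∧
    ∀ w, w - x ∈ lorentzCone v → w + x ∈ lorentzCone v →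
      ‖z - x‖ + ‖z + x‖ ≤ ‖w - x‖ + ‖w + x‖ ∧
        (‖w - x‖ + ‖w + x‖ ≤ ‖z - x‖ + ‖z + x‖ → w = z)

lemma IsQuasiAbs.neg {x z : H} (h : IsQuasiAbs v (-x) z) : IsQuasiAbs v x z := by
  obtain ⟨h1, h2, h3, h4⟩ := h
  simp only [sub_neg_eq_add, ← sub_eq_add_neg, norm_neg] at h1 h2 h3 h4
  refine ⟨h2, h1, h3, fun w hw1 hw2 => ?_⟩
  have := h4 w hw2 hw1
  rwa [add_comm ‖z - x‖, add_comm ‖w - x‖]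

lemma isQuasiAbs_self (hv : ‖v‖ = 1) {x : H} (hx : x ∈ lorentzCone v) : IsQuasiAbs v x x := by
  have hxx : ‖x + x‖ = 2 * ‖x‖ := by
    rw [← two_smul ℝ x, norm_smul]
    simp
  refine ⟨by simp [lorentzCone], ?_, rfl, fun w hw _ => ?_⟩
  · obtain ⟨a, p, hp, rfl⟩ := exists_lorentz_decomp hv x
    rw [mem_lorentzCone_decomp hv _ hp] at hx
    have h : (a • v + p) + (a • v + p) = (a + a) • v + (p + p) := by module
    rw [h, mem_lorentzCone_decomp hv _ (by simp [inner_add_right, hp])]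
    exact (norm_add_le p p).trans (by linarith)
  · have h0 := inner_nonneg_of_mem_lorentzCone_s19 hv hw hx
    have h1 : ‖w + x‖ ^ 2 = ‖w - x‖ ^ 2 + 4 * ⟪w - x, x⟫ + 4 * ‖x‖ ^ 2 := by
      have : w + x = (w - x) + (2 : ℝ) • x := by module
      rw [this, norm_add_sq_real, norm_smul, real_inner_smul_right, Real.norm_ofNat]
      ring
    have h2 : 2 * ‖x‖ ≤ ‖w + x‖ :=
      le_of_pow_le_pow_left₀ two_ne_zero (norm_nonneg _) (by nlinarith [sq_nonneg ‖w - x‖])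
    rw [sub_self, norm_zero, zero_add, hxx]
    refine ⟨by linarith [norm_nonneg (w - x)], fun h => ?_⟩
    exact sub_eq_zero.1 (norm_le_zero_iff.1 (by linarith))

/-- The case of `x` outside `± L_v`; both constraints are active at the minimizer. -/
lemma isQuasiAbs_of_abs_lt (hv : ‖v‖ = 1) {a : ℝ} {p : H} (hp : ⟪v, p⟫ = 0)
    (ha : |a| < ‖p‖) : IsQuasiAbs v (a • v + p) (‖p‖ • v + (a / ‖p‖) • p) := by
  have hp0 : 0 < ‖p‖ := (abs_nonneg a).trans_lt ha
  obtain ⟨ha1, ha2⟩ := abs_lt.1 ha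
  have hr : a / ‖p‖ * ‖p‖ = a := div_mul_cancel₀ _ hp0.ne'
  set r := a / ‖p‖ with hrdef
  have hr1 : r ≤ 1 := by rw [hrdef, div_le_one hp0]; exact ha2.le
  have hr2 : -1 ≤ r := by rw [hrdef, le_div_iff₀ hp0]; linarith
  have e1 : ∀ (t : ℝ) (q : H), (t • v + q) - (a • v + p) = (t - a) • v + (q - p) :=
    fun t q => by module
  have e2 : ∀ (t : ℝ) (q : H), (t • v + q) + (a • v + p) = (t + a) • v + (q + p) :=
    fun t q => by module
  have o1 : ∀ q : H, ⟪v, q⟫ = 0 → ⟪v, q - p⟫ = 0 := fun q hq => by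
    rw [inner_sub_right, hq, hp, sub_zero]
  have o2 : ∀ q : H, ⟪v, q⟫ = 0 → ⟪v, q + p⟫ = 0 := fun q hq => by
    rw [inner_add_right, hq, hp, add_zero]
  have orp : ⟪v, r • p⟫ = 0 := by rw [inner_smul_right, hp, mul_zero]
  have n1 : ‖r • p - p‖ = ‖p‖ - a := by
    have : r • p - p = (r - 1) • p := by module
    rw [this, norm_smul, Real.norm_eq_abs, abs_of_nonpos (by linarith)]
    linarith
  have n2 : ‖r • p + p‖ = ‖p‖ + a := by
    have : r • p + p = (r + 1) • p := by module
    rw [this, norm_smul, Real.norm_eq_abs, abs_of_nonneg (by linarith)]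
    linarith
  have hs : (√2) ^ 2 = 2 := Real.sq_sqrt (by norm_num)
  have hs0 : 0 < √2 := by positivity
  have hdiag : ∀ (s : ℝ) (y : H), ⟪v, y⟫ = 0 → ‖y‖ = s → ‖s • v + y‖ = √2 * s := by
    rintro s y hy rfl
    rw [← sq_eq_sq₀ (norm_nonneg _) (by positivity), norm_sq_decomp hv _ hy, mul_pow, hs]
    ring
  have hσ : ‖(‖p‖ • v + r • p) - (a • v + p)‖ + ‖(‖p‖ • v + r • p) + (a • v + p)‖
      = √2 * (2 * ‖p‖) := by
    rw [e1, e2, hdiag _ _ (o1 _ orp) n1, hdiag _ _ (o2 _ orp) n2]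
    ring
  refine ⟨?_, ?_, ?_, fun w hw1 hw2 => ?_⟩
  · rw [e1, mem_lorentzCone_decomp hv _ (o1 _ orp), n1]
  · rw [e2, mem_lorentzCone_decomp hv _ (o2 _ orp), n2]
  · rw [← sq_eq_sq₀ (norm_nonneg _) (norm_nonneg _), norm_sq_decomp hv _ hp,
      norm_sq_decomp hv _ orp, norm_smul, mul_pow, Real.norm_eq_abs, sq_abs, ← mul_pow, hr]
    ring
  · obtain ⟨t, q, hq, rfl⟩ := exists_lorentz_decomp hv w
    rw [hσ]
    rw [e1] at hw1 ⊢
    rw [e2] at hw2 ⊢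
    rw [mem_lorentzCone_decomp hv _ (o1 _ hq)] at hw1
    rw [mem_lorentzCone_decomp hv _ (o2 _ hq)] at hw2
    obtain ⟨k1, k1'⟩ := sqrt_two_mul_le_norm_decomp hv (o1 _ hq) hw1
    obtain ⟨k2, k2'⟩ := sqrt_two_mul_le_norm_decomp hv (o2 _ hq) hw2
    have htri : 2 * ‖p‖ ≤ ‖q - p‖ + ‖q + p‖ := by
      have h := norm_sub_le (q + p) (q - p)
      have : (q + p) - (q - p) = (2 : ℝ) • p := by module
      rw [this, norm_smul, Real.norm_ofNat] at h
      linarith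
    have hmul := mul_le_mul_of_nonneg_left htri hs0.le
    refine ⟨by linarith, fun h => ?_⟩
    have t1 := k1' (by linarith)
    have t2 := k2' (by linarith)
    have t3 : ‖q - p‖ + ‖q + p‖ ≤ 2 * ‖p‖ := le_of_mul_le_mul_left (by linarith) hs0
    have ht : t = ‖p‖ := by linarith
    have s1 := norm_sub_sq_real q p
    have s2 := norm_add_sq_real q p
    rw [← t1, ht] at s1
    rw [← t2, ht] at s2
    have i1 : ⟪q, p⟫ = a * ‖p‖ := by linarith
    have i2 : ‖q‖ ^ 2 = a ^ 2 := by linarith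
    have hqr : q = r • p := by
      have : ‖q - r • p‖ ^ 2 = 0 := by
        rw [norm_sub_sq_real, real_inner_smul_right, i1, i2, norm_smul, mul_pow,
          Real.norm_eq_abs, sq_abs, ← mul_pow, hr]
        linear_combination (-2 * a) * hr
      exact sub_eq_zero.1 (norm_eq_zero.1 (pow_eq_zero_iff (two_ne_zero) |>.1 this))
    rw [ht, hqr]

lemma exists_isQuasiAbs (hv : ‖v‖ = 1) (x : H) : ∃ z, IsQuasiAbs v x z := by
  obtain ⟨a, p, hp, rfl⟩ := exists_lorentz_decomp hv x
  rcases lt_or_ge |a| ‖p‖ with h | h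
  · exact ⟨_, isQuasiAbs_of_abs_lt hv hp h⟩
  rcases le_abs.1 h with h | h
  · exact ⟨_, isQuasiAbs_self hv ((mem_lorentzCone_decomp hv _ hp).2 h)⟩
  · refine ⟨_, (isQuasiAbs_self hv ?_).neg⟩
    have : -(a • v + p) = (-a) • v + -p := by module
    rw [this, mem_lorentzCone_decomp hv _ (by rw [inner_neg_right, hp, neg_zero]), norm_neg]
    exact h

end Lorentz

/-- In a real Hilbert space ordered by a Lorentz cone, every `x` has a unique
quasi-absolute value `⌈x⌉`: the unique upper bound `z` of `{x, -x}` minimizing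
`σ(w) = ‖w - x‖ + ‖w + x‖` over upper bounds of `{x, -x}`; it satisfies `‖⌈x⌉‖ = ‖x‖`.
Consequently `H` is `1`-absolutely conormal. Here `a ≤ b` means `b - a ∈ lorentzCone v`. -/
theorem stmt_19
    {H : Type*} [NormedAddCommGroup H] [InnerProductSpace ℝ H] [CompleteSpace H]
    (v : H) (hv : ‖v‖ = 1) :
    (∀ x : H,
      (∃! z : H, (z - x ∈ lorentzCone v ∧ z + x ∈ lorentzCone v) ∧
        ∀ w : H, (w - x ∈ lorentzCone v ∧ w + x ∈ lorentzCone v) →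
          ‖z - x‖ + ‖z + x‖ ≤ ‖w - x‖ + ‖w + x‖) ∧
      (∀ z : H, ((z - x ∈ lorentzCone v ∧ z + x ∈ lorentzCone v) ∧
          ∀ w : H, (w - x ∈ lorentzCone v ∧ w + x ∈ lorentzCone v) →
            ‖z - x‖ + ‖z + x‖ ≤ ‖w - x‖ + ‖w + x‖) →
        ‖z‖ = ‖x‖))
    ∧ ∀ x : H, ∃ a ∈ lorentzCone v,
        a - x ∈ lorentzCone v ∧ a + x ∈ lorentzCone v ∧ ‖a‖ ≤ ‖x‖ := by
  refine ⟨fun x => ?_, fun x => ?_⟩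
  · obtain ⟨z, h1, h2, h3, h4⟩ := exists_isQuasiAbs hv x
    have huniq : ∀ z' : H, ((z' - x ∈ lorentzCone v ∧ z' + x ∈ lorentzCone v) ∧
        ∀ w : H, (w - x ∈ lorentzCone v ∧ w + x ∈ lorentzCone v) →
          ‖z' - x‖ + ‖z' + x‖ ≤ ‖w - x‖ + ‖w + x‖) → z' = z :=
      fun z' h => (h4 z' h.1.1 h.1.2).2 (h.2 z ⟨h1, h2⟩)
    exact ⟨⟨z, ⟨⟨h1, h2⟩, fun w hw => (h4 w hw.1 hw.2).1⟩, huniq⟩,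
      fun z' h => by rw [huniq z' h, h3]⟩
  · obtain ⟨z, h1, h2, h3, -⟩ := exists_isQuasiAbs hv x
    refine ⟨z, ?_, h1, h2, h3.le⟩
    -- `2 z = (z - x) + (z + x)` is a sum of two elements of the cone.
    obtain ⟨a, p, hp, rfl⟩ := exists_lorentz_decomp hv x
    obtain ⟨t, q, hq, rfl⟩ := exists_lorentz_decomp hv z
    have e1 : (t • v + q) - (a • v + p) = (t - a) • v + (q - p) := by module
    have e2 : (t • v + q) + (a • v + p) = (t + a) • v + (q + p) := by module
    rw [e1, mem_lorentzCone_decomp hv _ (by rw [inner_sub_right, hq, hp, sub_zero])] at h1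
    rw [e2, mem_lorentzCone_decomp hv _ (by rw [inner_add_right, hq, hp, add_zero])] at h2
    rw [mem_lorentzCone_decomp hv _ hq]
    have h := norm_add_le (q - p) (q + p)
    have e3 : (q - p) + (q + p) = (2 : ℝ) • q := by module
    rw [e3, norm_smul, Real.norm_ofNat] at h
    linarith
end
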